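/- arXiv:2407.18863 — 3 statements merged into one kernel-verified Lean document; each statement's English description precedes it below -/
import Mathlib

section
/- Let G be a finitely generated group with finite symmetric generating set S, and suppose the Cayley graph X = Cay(G,S) satisfies the Morse local-to-global property. Then the Morse boundary of G is strongly σ-compact; that is, there exists a sequence (M_n)_{n∈ℕ} of Morse gauges such that every Morse geodesic ray in X based at the identity is M_n-Morse for some n, and for every Morse gauge M there exists n = n(M) such that every M-Morse geodesic ray in X based at the identity is M_n-Morse. -/
open Metric Set Filter

namespace MorseLTG

/-- A Morse gauge: a non-decreasing continuous function `[1, ∞) → [0, ∞)`. -/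
def IsMorseGauge (M : ℝ → ℝ) : Prop :=
  MonotoneOn M (Set.Ici 1) ∧ ContinuousOn M (Set.Ici 1) ∧ ∀ t : ℝ, 1 ≤ t → 0 ≤ M t

section Space

variable {X : Type*} [MetricSpace X]

/-- `γ` is a `Q`-quasi-geodesic on the set `I ⊆ ℝ`. -/
def QGeoOn (Q : ℝ) (I : Set ℝ) (γ : ℝ → X) : Prop :=
  ContinuousOn γ I ∧ ∀ s ∈ I, ∀ t ∈ I,
    |t - s| / Q - Q ≤ dist (γ s) (γ t) ∧ dist (γ s) (γ t) ≤ Q * |t - s| + Q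

/-- `γ` is `M`-Morse on `I`: every `Q`-quasi-geodesic with endpoints on `γ|_I`
stays in the closed `M Q`-neighbourhood of the corresponding subsegment of `γ`. -/
def MorseOn (M : ℝ → ℝ) (I : Set ℝ) (γ : ℝ → X) : Prop :=
  ∀ Q : ℝ, 1 ≤ Q → ∀ s ∈ I, ∀ t ∈ I, s ≤ t →
    ∀ (lam : ℝ → X) (a b : ℝ), a ≤ b → QGeoOn Q (Set.Icc a b) lam →
      lam a = γ s → lam b = γ t →
      ∀ u ∈ Set.Icc a b, ∃ v ∈ Set.Icc s t, dist (lam u) (γ v) ≤ M Q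

/-- `γ` is a geodesic on `I` (an isometric embedding). -/
def GeodesicOn (I : Set ℝ) (γ : ℝ → X) : Prop :=
  ∀ s ∈ I, ∀ t ∈ I, dist (γ s) (γ t) = |t - s|

/-- A geodesic ray based at `x₀`. -/
def GeodesicRayFrom (x₀ : X) (γ : ℝ → X) : Prop :=
  γ 0 = x₀ ∧ GeodesicOn (Set.Ici 0) γ

/-- A Morse geodesic ray (based anywhere). -/
def IsMorseGeodesicRay (γ : ℝ → X) : Prop :=
  GeodesicOn (Set.Ici 0) γ ∧ ∃ M : ℝ → ℝ, IsMorseGauge M ∧ MorseOn M (Set.Ici 0) γ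

/-- `p` is `L`-locally an `M`-Morse `Q`-quasi-geodesic on `I`. -/
def LocMorseQGeoOn (Q : ℝ) (M : ℝ → ℝ) (L : ℝ) (I : Set ℝ) (p : ℝ → X) : Prop :=
  ∀ s ∈ I, ∀ t ∈ I, s ≤ t → t - s ≤ L →
    QGeoOn Q (Set.Icc s t) p ∧ MorseOn M (Set.Icc s t) p

/-- `p` is `L`-locally `M`-Morse on `I`. -/
def LocMorseOn (M : ℝ → ℝ) (L : ℝ) (I : Set ℝ) (p : ℝ → X) : Prop :=
  ∀ s ∈ I, ∀ t ∈ I, s ≤ t → t - s ≤ L → MorseOn M (Set.Icc s t) p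

/-- The Morse local-to-global property for a geodesic metric space. -/
def MLTG (X : Type*) [MetricSpace X] : Prop :=
  ∀ Q : ℝ, 1 ≤ Q → ∀ M : ℝ → ℝ, IsMorseGauge M →
    ∃ (L Q' : ℝ) (M' : ℝ → ℝ), 0 < L ∧ 1 ≤ Q' ∧ IsMorseGauge M' ∧
      ∀ I : Set ℝ, I.OrdConnected → ∀ p : ℝ → X,
        LocMorseQGeoOn Q M L I p → QGeoOn Q' I p ∧ MorseOn M' I p

/-- `X` is a geodesic metric space. -/
def GeodesicSpace (X : Type*) [MetricSpace X] : Prop :=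
  ∀ x y : X, ∃ γ : ℝ → X, γ 0 = x ∧ γ (dist x y) = y ∧
    GeodesicOn (Set.Icc 0 (dist x y)) γ

/-- Gromov hyperbolicity via thin geodesic triangles. -/
def GromovHyperbolic (X : Type*) [MetricSpace X] : Prop :=
  ∃ δ : ℝ, 0 ≤ δ ∧
    ∀ (γ₁ γ₂ γ₃ : ℝ → X) (a₁ b₁ a₂ b₂ a₃ b₃ : ℝ),
      GeodesicOn (Set.Icc a₁ b₁) γ₁ → GeodesicOn (Set.Icc a₂ b₂) γ₂ →
        GeodesicOn (Set.Icc a₃ b₃) γ₃ →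
      γ₁ b₁ = γ₂ a₂ → γ₂ b₂ = γ₃ a₃ → γ₃ b₃ = γ₁ a₁ →
      ∀ s ∈ Set.Icc a₁ b₁,
        ∃ p ∈ γ₂ '' Set.Icc a₂ b₂ ∪ γ₃ '' Set.Icc a₃ b₃, dist (γ₁ s) p ≤ δ

/-- The set of closest-point projections of `x` to `A`. -/
def projSet (A : Set X) (x : X) : Set X :=
  {y ∈ A | ∀ z ∈ A, dist x y ≤ dist x z}

/-- A subset `A` is `C`-contracting. -/
def ContractingSet (C : ℝ) (A : Set X) : Prop :=
  ∀ x : X, Metric.diam (⋃ y ∈ Metric.ball x (Metric.infDist x A), projSet A y) ≤ C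

/-- `γ` is a `C`-contracting geodesic on `I`. -/
def ContractingOn (C : ℝ) (I : Set ℝ) (γ : ℝ → X) : Prop :=
  GeodesicOn I γ ∧ ContractingSet C (γ '' I)

/-- The Morse boundary of `X` (with basepoint `x₀`) is σ-compact. -/
def SigmaCompactMorseBoundary (x₀ : X) : Prop :=
  ∃ Ms : ℕ → ℝ → ℝ, (∀ n, IsMorseGauge (Ms n)) ∧
    ∀ γ : ℝ → X, GeodesicRayFrom x₀ γ → ∀ M : ℝ → ℝ, IsMorseGauge M →
      MorseOn M (Set.Ici 0) γ → ∃ n, MorseOn (Ms n) (Set.Ici 0) γ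

/-- `Ms` is a strong exhaustion of the Morse boundary of `X` based at `x₀`. -/
def IsStrongExhaustion (x₀ : X) (Ms : ℕ → ℝ → ℝ) : Prop :=
  (∀ n, IsMorseGauge (Ms n)) ∧
  (∀ γ : ℝ → X, GeodesicRayFrom x₀ γ → ∀ M : ℝ → ℝ, IsMorseGauge M →
    MorseOn M (Set.Ici 0) γ → ∃ n, MorseOn (Ms n) (Set.Ici 0) γ) ∧
  (∀ M : ℝ → ℝ, IsMorseGauge M → ∃ n, ∀ γ : ℝ → X, GeodesicRayFrom x₀ γ →
    MorseOn M (Set.Ici 0) γ → MorseOn (Ms n) (Set.Ici 0) γ)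

/-- The Morse boundary of `X` (with basepoint `x₀`) is strongly σ-compact. -/
def StronglySigmaCompactMorseBoundary (x₀ : X) : Prop :=
  ∃ Ms : ℕ → ℝ → ℝ, IsStrongExhaustion x₀ Ms

end Space

section Action

variable {G : Type*} [Group G] {X : Type*} [MetricSpace X]

/-- `φ` is an action of `G` on `X` by isometries. -/
def IsIsometricAction (φ : G → X → X) : Prop :=
  (∀ x : X, φ 1 x = x) ∧ (∀ g h : G, ∀ x : X, φ (g * h) x = φ g (φ h x)) ∧
    ∀ g : G, Isometry (φ g)

/-- `φ` is a geometric (proper and cocompact, isometric) action of `G` on `X`. -/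
def IsGeometricAction (φ : G → X → X) : Prop :=
  IsIsometricAction φ ∧
  (∀ (x : X) (r : ℝ), {g : G | dist x (φ g x) ≤ r}.Finite) ∧
  (∃ (x₀ : X) (r : ℝ), ∀ y : X, ∃ g : G, dist y (φ g x₀) ≤ r)

end Action

/-- `G` has contraction: it acts geometrically on some geodesic metric space
containing a strongly contracting geodesic ray. -/
def HasContraction (G : Type*) [Group G] : Prop :=
  ∃ (X : Type) (m : MetricSpace X), ∃ φ : G → X → X,
    letI := m
    IsGeometricAction φ ∧ GeodesicSpace X ∧
      ∃ (γ : ℝ → X) (C : ℝ), 0 ≤ C ∧ GeodesicOn (Set.Ici 0) γ ∧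
        ContractingSet C (γ '' Set.Ici 0)

section Horo

variable {X : Type*} [MetricSpace X]

/-- The horofunction associated to a geodesic ray `γ` based at `x₀`
(for geodesic rays, the infimum below equals the limit of
`t ↦ d(z, γ t) - d(x₀, γ t)` as `t → ∞`, since this function is non-increasing
and bounded below). -/
noncomputable def horofn (x₀ : X) (γ : ℝ → X) (z : X) : ℝ :=
  sInf ((fun t => dist z (γ t) - dist x₀ (γ t)) '' Set.Ici 0)

/-- The horofunction map `y ↦ ρ_y = d(·, y) - d(x₀, y)`. -/
noncomputable def horomap (x₀ y : X) : ContinuousMap X ℝ :=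
  ⟨fun z => dist z y - dist x₀ y, by fun_prop⟩

end Horo

section HoroAction

variable {G : Type*} [Group G] {X : Type*} [MetricSpace X]

/-- The `G`-action on the horofunction compactification:
`(g · f)(z) = f (g⁻¹ z) - f (g⁻¹ x₀)`. -/
noncomputable def horoAction (φ : G → X → X) (hc : ∀ g : G, Continuous (φ g)) (x₀ : X)
    (g : G) (f : ContinuousMap X ℝ) : ContinuousMap X ℝ :=
  ⟨fun z => f (φ g⁻¹ z) - f (φ g⁻¹ x₀), (f.continuous.comp (hc g⁻¹)).sub continuous_const⟩

end HoroAction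

section Words

variable {S : Type*}

/-- A word over the symmetrised alphabet `S ∪ S⁻¹`. -/
abbrev Word (S : Type*) := List (S × Bool)

/-- The formal inverse of a word. -/
def wordInv (w : Word S) : Word S := (w.map fun a => (a.1, !a.2)).reverse

/-- A word is reduced if it has no adjacent cancelling pair. -/
def ReducedWord (w : Word S) : Prop := w.Chain' fun a b => a.1 = b.1 → a.2 = b.2

/-- A word is cyclically reduced if all its cyclic shifts are reduced. -/
def CyclicallyReduced (w : Word S) : Prop := ∀ k : ℕ, ReducedWord (w.rotate k)

/-- The closure of `R ∪ R⁻¹` under cyclic shifts. -/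
def symmClosure (R : Set (Word S)) : Set (Word S) :=
  {w | ∃ r ∈ R, ∃ k : ℕ, w = r.rotate k ∨ w = (wordInv r).rotate k}

/-- A piece: a (non-trivial) common prefix of two distinct elements of `R̄`. -/
def IsPiece (R : Set (Word S)) (p : Word S) : Prop :=
  p ≠ [] ∧ ∃ r₁ ∈ symmClosure R, ∃ r₂ ∈ symmClosure R, r₁ ≠ r₂ ∧ p <+: r₁ ∧ p <+: r₂

/-- The `C'(lam)` small-cancellation condition. -/
def SmallCancellation (R : Set (Word S)) (lam : ℝ) : Prop :=
  (∀ r ∈ R, CyclicallyReduced r) ∧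
  ∀ r ∈ symmClosure R, ∀ p : Word S, IsPiece R p → p <:+: r →
    (p.length : ℝ) < lam * r.length

/-- A viable function. -/
def Viable (f : ℕ → ℝ) : Prop :=
  Monotone f ∧ (∀ n, 6 ≤ f n) ∧ Filter.Tendsto f Filter.atTop Filter.atTop

/-- The pair `(x, R)` satisfies the `C'(1/f)` small-cancellation condition. -/
def PairSmallCancellation (f : ℕ → ℝ) (x : Word S) (R : Set (Word S)) : Prop :=
  ∀ r ∈ symmClosure R, ∀ p : Word S, p ≠ [] → p <:+: x → p <:+: r →
    (p.length : ℝ) < (r.length : ℝ) / f r.length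

/-- The increasing partial small-cancellation condition. -/
def IPSC (R : Set (Word S)) : Prop :=
  ∀ ns : ℕ → ℕ, (∀ i, 0 < ns i) →
    ∃ f : ℕ → ℝ, Viable f ∧
      ∀ K : ℕ, ∃ i : ℕ, K ≤ i ∧ ∃ r ∈ symmClosure R, ∃ x y : Word S,
        r = x ++ y ∧ (ns i : ℝ) ≤ r.length ∧ (r.length : ℝ) / i ≤ x.length ∧
        PairSmallCancellation f x R

end Words

section Cayley

variable {G : Type*} [Group G] {S : Type*}

/-- The element of `G` spelled by a word over `S ∪ S⁻¹`. -/
def evalWord (σ : S → G) (w : Word S) : G :=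
  (w.map fun a => if a.2 then σ a.1 else (σ a.1)⁻¹).prod

/-- The word metric on `G` with respect to the generating map `σ`. -/
noncomputable def wordDist (σ : S → G) (g h : G) : ℕ :=
  sInf {n : ℕ | ∃ w : Word S, w.length = n ∧ g * evalWord σ w = h}

/-- A (discrete) edge path in the Cayley graph: consecutive points are adjacent. -/
def DIsPath (σ : S → G) (I : Set ℤ) (p : ℤ → G) : Prop :=
  ∀ n : ℤ, n ∈ I → n + 1 ∈ I → wordDist σ (p n) (p (n + 1)) ≤ 1

/-- A discrete `Q`-quasi-geodesic in the Cayley graph. -/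
def DQGeoOn (σ : S → G) (Q : ℝ) (I : Set ℤ) (p : ℤ → G) : Prop :=
  DIsPath σ I p ∧ ∀ m ∈ I, ∀ n ∈ I,
    |(n : ℝ) - (m : ℝ)| / Q - Q ≤ (wordDist σ (p m) (p n) : ℝ) ∧
      (wordDist σ (p m) (p n) : ℝ) ≤ Q * |(n : ℝ) - (m : ℝ)| + Q

/-- A discrete geodesic in the Cayley graph. -/
def DGeodesicOn (σ : S → G) (I : Set ℤ) (p : ℤ → G) : Prop :=
  ∀ m ∈ I, ∀ n ∈ I, (wordDist σ (p m) (p n) : ℤ) = |n - m|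

/-- `p` is `M`-Morse on `I` in the Cayley graph. -/
def DMorseOn (σ : S → G) (M : ℝ → ℝ) (I : Set ℤ) (p : ℤ → G) : Prop :=
  ∀ Q : ℝ, 1 ≤ Q → ∀ s ∈ I, ∀ t ∈ I, s ≤ t →
    ∀ (q : ℤ → G) (a b : ℤ), a ≤ b → DQGeoOn σ Q (Set.Icc a b) q →
      q a = p s → q b = p t →
      ∀ n ∈ Set.Icc a b, ∃ m ∈ Set.Icc s t, (wordDist σ (q n) (p m) : ℝ) ≤ M Q

/-- A geodesic ray in the Cayley graph based at the identity. -/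
def DGeodesicRay (σ : S → G) (p : ℤ → G) : Prop :=
  p 0 = 1 ∧ DGeodesicOn σ (Set.Ici 0) p

/-- `p` is `L`-locally an `M`-Morse `Q`-quasi-geodesic. -/
def DLocMorseQGeoOn (σ : S → G) (Q : ℝ) (M : ℝ → ℝ) (L : ℝ) (I : Set ℤ) (p : ℤ → G) : Prop :=
  ∀ s ∈ I, ∀ t ∈ I, s ≤ t → ((t - s : ℤ) : ℝ) ≤ L →
    DQGeoOn σ Q (Set.Icc s t) p ∧ DMorseOn σ M (Set.Icc s t) p

/-- `p` is `L`-locally `M`-Morse. -/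
def DLocMorseOn (σ : S → G) (M : ℝ → ℝ) (L : ℝ) (I : Set ℤ) (p : ℤ → G) : Prop :=
  ∀ s ∈ I, ∀ t ∈ I, s ≤ t → ((t - s : ℤ) : ℝ) ≤ L → DMorseOn σ M (Set.Icc s t) p

/-- The Morse local-to-global property for the Cayley graph of `(G, σ)`. -/
def CayMLTG (σ : S → G) : Prop :=
  ∀ Q : ℝ, 1 ≤ Q → ∀ M : ℝ → ℝ, IsMorseGauge M →
    ∃ (L Q' : ℝ) (M' : ℝ → ℝ), 0 < L ∧ 1 ≤ Q' ∧ IsMorseGauge M' ∧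
      ∀ I : Set ℤ, I.OrdConnected → ∀ p : ℤ → G,
        DLocMorseQGeoOn σ Q M L I p → DQGeoOn σ Q' I p ∧ DMorseOn σ M' I p

/-- The geodesic Morse local-to-global property for the Cayley graph. -/
def CayGeodesicMLTG (σ : S → G) : Prop :=
  ∀ M : ℝ → ℝ, IsMorseGauge M →
    ∃ (L : ℝ) (M' : ℝ → ℝ), 0 < L ∧ IsMorseGauge M' ∧
      ∀ I : Set ℤ, I.OrdConnected → ∀ p : ℤ → G, DGeodesicOn σ I p →
        DLocMorseOn σ M L I p → DMorseOn σ M' I p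

/-- σ-compactness of the Morse boundary of the Cayley graph. -/
def CaySigmaCompact (σ : S → G) : Prop :=
  ∃ Ms : ℕ → ℝ → ℝ, (∀ n, IsMorseGauge (Ms n)) ∧
    ∀ p : ℤ → G, DGeodesicRay σ p → ∀ M : ℝ → ℝ, IsMorseGauge M →
      DMorseOn σ M (Set.Ici 0) p → ∃ n, DMorseOn σ (Ms n) (Set.Ici 0) p

/-- Strong σ-compactness of the Morse boundary of the Cayley graph. -/
def CayStronglySigmaCompact (σ : S → G) : Prop :=
  ∃ Ms : ℕ → ℝ → ℝ, (∀ n, IsMorseGauge (Ms n)) ∧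
    (∀ p : ℤ → G, DGeodesicRay σ p → ∀ M : ℝ → ℝ, IsMorseGauge M →
      DMorseOn σ M (Set.Ici 0) p → ∃ n, DMorseOn σ (Ms n) (Set.Ici 0) p) ∧
    (∀ M : ℝ → ℝ, IsMorseGauge M → ∃ n, ∀ p : ℤ → G, DGeodesicRay σ p →
      DMorseOn σ M (Set.Ici 0) p → DMorseOn σ (Ms n) (Set.Ici 0) p)

/-- The edge path starting at `g` labelled by the word `w`. -/
def pathOfWord (σ : S → G) (g : G) (w : Word S) : ℤ → G :=
  fun n => g * evalWord σ (w.take n.toNat)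

end Cayley

/-- The canonical generating map of a presented group `⟨S | R⟩`. -/
def presGen {S : Type*} (R : Set (Word S)) : S → PresentedGroup (FreeGroup.mk '' R) :=
  fun s => PresentedGroup.of s

end MorseLTG

namespace MorseLTG

theorem wordDist_mul_left {G : Type*} [Group G] {S : Type*} (σ : S → G) (g x y : G) :
    wordDist σ (g * x) (g * y) = wordDist σ x y := by
  unfold wordDist
  simp [mul_assoc]

theorem morse_transfer {G : Type*} [Group G] {S : Type*} (σ : S → G) (M : ℝ → ℝ) (g : G)
    (a b c : ℤ) (p p' : ℤ → G) (h : ∀ n ∈ Set.Icc a b, p n = g * p' (n + c))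
    (hM : DMorseOn σ M (Set.Icc (a + c) (b + c)) p') : DMorseOn σ M (Set.Icc a b) p := by
  intro Q hQ s hs t ht hst q x y hxy hq hx hy n hn
  have hs' := Set.mem_Icc.1 hs
  have ht' := Set.mem_Icc.1 ht
  obtain ⟨m, hm, hd⟩ := hM Q hQ (s + c) (Set.mem_Icc.2 ⟨by omega, by omega⟩) (t + c)
    (Set.mem_Icc.2 ⟨by omega, by omega⟩) (by omega) (fun i => g⁻¹ * q i) x y hxy
    (by simpa only [DQGeoOn, DIsPath, wordDist_mul_left] using hq)
    (by simp [hx, h s hs]) (by simp [hy, h t ht]) n hn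
  have hm' := Set.mem_Icc.1 hm
  refine ⟨m - c, Set.mem_Icc.2 ⟨by omega, by omega⟩, ?_⟩
  rw [h (m - c) (Set.mem_Icc.2 ⟨by omega, by omega⟩), sub_add_cancel,
    ← wordDist_mul_left σ g⁻¹]
  simpa using hd

theorem morse_mono {G : Type*} [Group G] {S : Type*} (σ : S → G) (M : ℝ → ℝ)
    {I J : Set ℤ} (hIJ : I ⊆ J) (p : ℤ → G) (h : DMorseOn σ M J p) : DMorseOn σ M I p :=
  fun Q hQ s hs t ht => h Q hQ s (hIJ hs) t (hIJ ht)

/-- The word `w` labels the path `p` from time `s`. -/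
def Labels {G : Type*} [Group G] {S : Type*} (σ : S → G) (p : ℤ → G) (s : ℤ) (w : Word S) :
    Prop :=
  ∀ i : ℕ, i ≤ w.length → p (s + i) = p s * evalWord σ (w.take i)

/-- All short subpaths are labelled by words in `F`. -/
def LocIn {G : Type*} [Group G] {S : Type*} (σ : S → G) (N : ℕ) (F : Set (Word S))
    (p : ℤ → G) : Prop :=
  ∀ s : ℤ, 0 ≤ s → ∀ k : ℕ, k ≤ N → ∃ w ∈ F, w.length = k ∧ Labels σ p s w

theorem exists_label {G : Type*} [Group G] {S : Type*} (σ : S → G) (p : ℤ → G)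
    (hp : DGeodesicOn σ (Set.Ici 0) p) (s : ℤ) (hs : 0 ≤ s) (k : ℕ) :
    ∃ w : Word S, w.length = k ∧ Labels σ p s w := by
  induction k with
  | zero =>
    refine ⟨[], rfl, ?_⟩
    intro i hi
    have : i = 0 := by simpa using hi
    subst this
    simp [evalWord]
  | succ k ih =>
    obtain ⟨w, hw, hl⟩ := ih
    have h1 : wordDist σ (p (s + k)) (p (s + k + 1)) = 1 := by
      have := hp (s + k) (Set.mem_Ici.2 (by omega)) (s + k + 1) (Set.mem_Ici.2 (by omega))
      simp at this
      exact_mod_cast this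
    have hne : {n : ℕ | ∃ w : Word S, w.length = n ∧
        p (s + k) * evalWord σ w = p (s + k + 1)}.Nonempty :=
      Nat.nonempty_of_sInf_eq_succ (k := 0) h1
    have hmem := Nat.sInf_mem hne
    change wordDist σ (p (s + k)) (p (s + k + 1)) ∈ _ at hmem
    rw [h1] at hmem
    obtain ⟨v, hv, he⟩ := hmem
    refine ⟨w ++ v, by simp [hw, hv], ?_⟩
    intro i hi
    rcases Nat.lt_or_ge k i with hki | hki
    · have hik : i = k + 1 := by
        simp [hw, hv] at hi
        omega
      subst hik
      rw [List.take_of_length_le (by simp [hw, hv])]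
      have hk := hl k hw.ge
      rw [List.take_of_length_le hw.le] at hk
      push_cast
      rw [← add_assoc, ← he, hk]
      simp [evalWord, mul_assoc]
    · rw [List.take_append_of_le_length (by omega)]
      exact hl i (by omega)

theorem geod_qgeo {G : Type*} [Group G] {S : Type*} (σ : S → G) (p : ℤ → G) (I : Set ℤ)
    (hp : DGeodesicOn σ I p) : DQGeoOn σ 1 I p := by
  refine ⟨fun n hn hn1 => ?_, fun m hm n hn => ?_⟩
  · have := hp n hn _ hn1
    simp at this
    omega
  · have h : ((wordDist σ (p m) (p n) : ℤ) : ℝ) = ((|n - m| : ℤ) : ℝ) := by rw [hp m hm n hn]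
    push_cast at h
    rw [h]
    constructor <;> linarith

end MorseLTG

open MorseLTG in
/-- MLTG for the Cayley graph implies the Morse boundary of `G`
is strongly σ-compact. -/
theorem stmt0 {G : Type*} [Group G] {S : Type*} [Fintype S] (σ : S → G)
    (hsymm : ∀ s : S, ∃ s' : S, σ s' = (σ s)⁻¹)
    (hgen : Subgroup.closure (Set.range σ) = ⊤)
    (hmltg : CayMLTG σ) :
    CayStronglySigmaCompact σ := by
  classical
  have hc : Countable S := inferInstance
  obtain ⟨e, he⟩ := exists_surjective_nat (ℕ × Finset (Word S))
  have key : ∀ x : ℕ × Finset (Word S), ∃ M : ℝ → ℝ, IsMorseGauge M ∧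
      ((∃ M' : ℝ → ℝ, IsMorseGauge M' ∧ ∀ p : ℤ → G, DGeodesicRay σ p →
        LocIn σ x.1 (x.2 : Set (Word S)) p → DMorseOn σ M' (Set.Ici 0) p) →
      ∀ p : ℤ → G, DGeodesicRay σ p →
        LocIn σ x.1 (x.2 : Set (Word S)) p → DMorseOn σ M (Set.Ici 0) p) := by
    intro x
    by_cases h : ∃ M' : ℝ → ℝ, IsMorseGauge M' ∧ ∀ p : ℤ → G, DGeodesicRay σ p →
        LocIn σ x.1 (x.2 : Set (Word S)) p → DMorseOn σ M' (Set.Ici 0) p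
    · obtain ⟨M', h1, h2⟩ := h
      exact ⟨M', h1, fun _ => h2⟩
    · exact ⟨fun _ => 0, ⟨fun _ _ _ _ _ => le_rfl, continuousOn_const, fun _ _ => le_rfl⟩,
        fun h' => absurd h' h⟩
  choose Mx hMx hMx2 using key
  have main : ∀ M : ℝ → ℝ, IsMorseGauge M → ∃ n, ∀ p : ℤ → G, DGeodesicRay σ p →
      DMorseOn σ M (Set.Ici 0) p → DMorseOn σ (Mx (e n)) (Set.Ici 0) p := by
    intro M hM
    obtain ⟨L, Q', M', hL, hQ', hM', hloc⟩ := hmltg 1 le_rfl M hM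
    have hfin : {w : Word S | w.length ≤ ⌊L⌋₊ ∧
        DMorseOn σ M (Set.Icc 0 (w.length : ℤ)) (pathOfWord σ 1 w)}.Finite :=
      (List.finite_length_le (S × Bool) ⌊L⌋₊).subset fun w hw => hw.1
    obtain ⟨n, hn⟩ := he (⌊L⌋₊, hfin.toFinset)
    refine ⟨n, fun p hp hpM => ?_⟩
    refine hMx2 (e n) ⟨M', hM', ?_⟩ p hp ?_
    · rw [hn]
      intro p hp hin
      refine (hloc (Set.Ici 0) Set.ordConnected_Ici p ?_).2
      intro s hs t ht hst htL
      refine ⟨geod_qgeo σ p _ fun a ha b hb => hp.2 a ?_ b ?_, ?_⟩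
      · exact le_trans hs ha.1
      · exact le_trans hs hb.1
      · obtain ⟨k, hk⟩ := Int.eq_ofNat_of_zero_le (sub_nonneg.2 hst)
        have hkL : k ≤ ⌊L⌋₊ := by
          apply Nat.le_floor
          rw [hk] at htL
          simpa using htL
        obtain ⟨w, hw, hwk, hlab⟩ := hin s hs k hkL
        simp only [Set.Finite.coe_toFinset, Set.mem_setOf_eq] at hw
        refine morse_transfer σ M (p s) s t (-s) p (pathOfWord σ 1 w) ?_ ?_
        · intro m hm
          have hm' := Set.mem_Icc.1 hm
          have := hlab (m - s).toNat (by omega)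
          rw [Int.toNat_of_nonneg (by omega), add_sub_cancel] at this
          rw [this]
          simp [pathOfWord, sub_eq_add_neg]
        · have h2 := hw.2
          rw [hwk] at h2
          have e1 : s + -s = 0 := by omega
          have e2 : t + -s = (k : ℤ) := by
            omega
          rw [e1, e2]
          exact h2
    · rw [hn]
      intro s hs k hk
      obtain ⟨w, hw, hl⟩ := exists_label σ p hp.2 s hs k
      refine ⟨w, ?_, hw, hl⟩
      simp only [Set.Finite.coe_toFinset, Set.mem_setOf_eq]
      refine ⟨by omega, morse_transfer σ M (p s)⁻¹ 0 w.length s _ p ?_ ?_⟩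
      · intro m hm
        have hm' := Set.mem_Icc.1 hm
        have := hl m.toNat (by omega)
        rw [Int.toNat_of_nonneg hm'.1] at this
        rw [add_comm m s, this]
        simp [pathOfWord]
      · refine morse_mono σ M ?_ p hpM
        intro m hm
        have hm' := Set.mem_Icc.1 hm
        exact Set.mem_Ici.2 (by omega)
  refine ⟨fun n => Mx (e n), fun n => hMx _, ?_, main⟩
  intro p hp M hM hpM
  obtain ⟨n, hn⟩ := main M hM
  exact ⟨n, hn p hp hpM⟩
end

section
/- Let M be a Morse gauge and let G = ⟨S|R⟩ be a C'(1/6) group whose Cayley graph Cay(G,S) satisfies the geodesic MLTG property. Then there exists a scale L such that for each integer N ≥ 2 there exists a constant D with the following property: if r ∈ R is a relator and w is a subword of r such that |w| ≥ |r|/N and some edge path in Cay(G,S) labelled by w is L-locally M-Morse, then |r| ≤ D. -/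
open Metric Set Filter

namespace SCG

structure RelSys (A : Type*) where
  inv : A → A
  inv_inv : ∀ a, inv (inv a) = a
  Rel : (ℤ → A) → ℤ → Prop
  pos : ∀ {f n}, Rel f n → 0 < n
  per : ∀ {f n}, Rel f n → ∀ i, f (i + n) = f i
  shift : ∀ {f n}, Rel f n → ∀ j, Rel (fun i => f (i + j)) n
  rev : ∀ {f n}, Rel f n → ∀ j, Rel (fun i => inv (f (j - i))) n
  red : ∀ {f n}, Rel f n → ∀ i, f (i + 1) ≠ inv (f i)
  small : ∀ {f n g m}, Rel f n → Rel g m → ∀ l, (∀ i, 0 ≤ i → i < l → f i = g i) →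
    (f = g ∧ n = m) ∨ (6 * l < n ∧ 6 * l < m)

variable {A : Type*} (Q : RelSys A) {Z : Type*}

structure IsGraph (V : Set Z) (E : Z → A → Z → Prop) : Prop where
  suppl : ∀ {x a y}, E x a y → x ∈ V
  suppr : ∀ {x a y}, E x a y → y ∈ V
  symm : ∀ {x a y}, E x a y → E y (Q.inv a) x
  det : ∀ {x a y y'}, E x a y → E x a y' → y = y'

def Closed (E : Z → A → Z → Prop) (f : ℤ → A) (n : ℤ) (v : Z) : Prop :=
  ∃ ζ : ℤ → Z, ζ 0 = v ∧ (∀ i, ζ (i + n) = ζ i) ∧ ∀ i, E (ζ i) (f i) (ζ (i + 1))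

def PathOn (E : Z → A → Z → Prop) (f : ℤ → A) (a b : ℤ) (ζ : ℤ → Z) : Prop :=
  ∀ i, a ≤ i → i < b → E (ζ i) (f i) (ζ (i + 1))

def Good (E : Z → A → Z → Prop) : Prop :=
  ∀ f n, Q.Rel f n → ∀ (ζ : ℤ → Z) (m : ℤ), PathOn E f 0 m ζ → n ≤ 3 * m → Closed E f n (ζ 0)

variable {Q} {V : Set Z} {E : Z → A → Z → Prop}

theorem IsGraph.codet (hG : IsGraph Q V E) {x x' a y} (h : E x a y) (h' : E x' a y) : x = x' :=
  hG.det (hG.symm h) (hG.symm h')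

theorem path_agree (hG : IsGraph Q V E) {f : ℤ → A} {a b : ℤ} {ζ ζ' : ℤ → Z}
    (h : PathOn E f a b ζ) (h' : PathOn E f a b ζ') {c : ℤ} (hac : a ≤ c) (hcb : c ≤ b)
    (hc : ζ c = ζ' c) : ∀ d, a ≤ d → d ≤ b → ζ d = ζ' d := by
  have up : ∀ d, c ≤ d → d ≤ b → ζ d = ζ' d := by
    intro d hd
    induction d, hd using Int.leInduction with
    | base => intro _; exact hc
    | succ d hd ih =>
      intro hb
      have h1 := h d (by omega) (by omega)
      have h2 := h' d (by omega) (by omega)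
      rw [← ih (by omega)] at h2
      exact hG.det h1 h2
  have down : ∀ d, d ≤ c → a ≤ d → ζ d = ζ' d := by
    intro d hd
    induction d, hd using Int.leInductionDown with
    | base => intro _; exact hc
    | pred d hd ih =>
      intro hb
      have h1 := h (d-1) (by omega) (by omega)
      have h2 := h' (d-1) (by omega) (by omega)
      rw [sub_add_cancel] at h1 h2
      rw [← ih (by omega)] at h2
      exact hG.codet h1 h2
  intro d h1 h2
  rcases le_total c d with h3 | h3
  · exact up d h3 h2
  · exact down d h3 h1

theorem closed_shift {f : ℤ → A} {n : ℤ} {ζ : ℤ → Z} (hp : ∀ i, ζ (i + n) = ζ i)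
    (he : ∀ i, E (ζ i) (f i) (ζ (i + 1))) (j : ℤ) : Closed E (fun i => f (i + j)) n (ζ j) := by
  refine ⟨fun i => ζ (i + j), by simp, fun i => ?_, fun i => ?_⟩
  · have := hp (i + j)
    change ζ (i + n + j) = ζ (i + j)
    rw [← this]; congr 1; ring
  · have := he (i + j)
    change E (ζ (i + j)) (f (i + j)) (ζ (i + 1 + j))
    rwa [show i + 1 + j = i + j + 1 by ring]

theorem closed_of_path (hG : IsGraph Q V E) {f : ℤ → A} {n a b : ℤ} {ζ : ℤ → Z}
    (h : PathOn E f a b ζ) {c : ℤ} (hac : a ≤ c) (hcb : c ≤ b)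
    (hc : Closed E (fun i => f (i + c)) n (ζ c)) {d : ℤ} (had : a ≤ d) (hdb : d ≤ b) :
    Closed E (fun i => f (i + d)) n (ζ d) := by
  obtain ⟨ξ, h0, hp, he⟩ := hc
  have he' : ∀ i, E (ξ (i - c)) (f i) (ξ (i + 1 - c)) := by
    intro i
    have := he (i - c)
    simp only [sub_add_cancel] at this
    rwa [show i - c + 1 = i + 1 - c by ring] at this
  have := path_agree hG h (ζ' := fun i => ξ (i - c)) (fun i _ _ => he' i) hac hcb
    (by simp [h0]) d had hdb
  rw [this]
  exact closed_shift (ζ := fun i => ξ (i - c)) (fun i => by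
    rw [← hp (i - c)]; congr 1; ring) he' d

theorem closed_of_loop {f : ℤ → A} {n : ℤ} (hn : 0 < n) (hf : ∀ i, f (i + n) = f i)
    {ζ : ℤ → Z} (h : PathOn E f 0 n ζ) (h0 : ζ n = ζ 0) : Closed E f n (ζ 0) := by
  have hfm : ∀ i, f (i % n) = f i := by
    have h1 : ∀ (k : ℕ) i, f (i + k * n) = f i := by
      intro k
      induction k with
      | zero => simp
      | succ k ih =>
        intro i
        rw [← ih i, ← hf (i + k * n)]; congr 1; push_cast; ring
    intro i
    have h2 := Int.emod_add_mul_ediv i n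
    rcases le_total 0 (i / n) with h3 | h3
    · obtain ⟨k, hk⟩ := Int.eq_ofNat_of_zero_le h3
      rw [hk] at h2
      rw [← h1 k (i % n)]; congr 1; linarith
    · obtain ⟨k, hk⟩ := Int.eq_ofNat_of_zero_le (neg_nonneg.2 h3)
      rw [← h1 k i]; congr 1; rw [← hk]; linarith
  refine ⟨fun i => ζ (i % n), by simp, fun i => by simp, fun i => ?_⟩
  have h1 := Int.emod_nonneg i hn.ne'
  have h2 := Int.emod_lt_of_pos i hn
  have h3 := h (i % n) h1 h2
  rw [hfm] at h3
  have h4 : ζ ((i + 1) % n) = ζ (i % n + 1) := by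
    by_cases h5 : i % n + 1 = n
    · rw [h5, h0]; congr 1
      rw [Int.add_emod, ← Int.emod_emod_of_dvd (i % n + 1 % n) (dvd_refl n)]
      have : (i % n + 1 % n) % n = (i % n + 1) % n := by simp
      rw [Int.emod_emod_of_dvd _ (dvd_refl n), this, h5]; simp
    · congr 1
      have : (i + 1) % n = (i % n + 1) % n := by simp
      rw [this]; exact Int.emod_eq_of_lt (by omega) (by omega)
  simp only
  rw [h4]; exact h3

theorem good_at (hgood : Good Q E) {f : ℤ → A} {n : ℤ} (hr : Q.Rel f n) {ζ : ℤ → Z} {a b : ℤ}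
    (h : PathOn E f a b ζ) (hn : n ≤ 3 * (b - a)) : Closed E (fun i => f (i + a)) n (ζ a) := by
  have := hgood _ _ (Q.shift hr a) (fun i => ζ (i + a)) (b - a) (by
    intro i hi1 hi2
    have := h (i + a) (by omega) (by omega)
    change E (ζ (i + a)) (f (i + a)) (ζ (i + 1 + a))
    rwa [show i + 1 + a = i + a + 1 by ring]) hn
  simpa using this

/-! ### arcs -/

variable (Q V E) in
@[ext] structure Arc where
  v : Z
  v' : Z
  f : ℤ → A
  n : ℤ
  k : ℤ
  rel : Q.Rel f n
  hk : 0 ≤ k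
  hv : v ∈ V
  hv' : v' ∈ V
  path : ∃ ζ : ℤ → Z, ζ 0 = v ∧ ζ (-k) = v' ∧ PathOn E f (-k) 0 ζ
  out : ∀ w, ¬ E v (f 0) w
  inn : ∀ w, ¬ E w (f (-k-1)) v'

namespace Arc

def rev (hG : IsGraph Q V E) (α : Arc Q V E) : Arc Q V E where
  v := α.v'
  v' := α.v
  f := fun i => Q.inv (α.f (α.n - α.k - 1 - i))
  n := α.n
  k := α.k
  rel := Q.rev α.rel _
  hk := α.hk
  hv := α.hv'
  hv' := α.hv
  path := by
    obtain ⟨ζ, h0, h1, h2⟩ := α.path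
    refine ⟨fun i => ζ (-α.k - i), by simpa using h1, by simpa using h0, ?_⟩
    intro i hi1 hi2
    have := hG.symm (h2 (-α.k - i - 1) (by omega) (by omega))
    rw [← Q.per α.rel] at this
    simp only
    convert this using 2
    · congr 1; ring
    · congr 1; ring
    · ring
  out := by
    intro w hw
    have := hG.symm hw
    rw [Q.inv_inv] at this
    apply α.inn w
    rw [← Q.per α.rel]
    convert this using 2; ring
  inn := by
    intro w hw
    have := hG.symm hw
    rw [Q.inv_inv] at this
    apply α.out w
    rw [← Q.per α.rel]
    convert this using 2; ring

theorem rev_rev (hG : IsGraph Q V E) (α : Arc Q V E) : (α.rev hG).rev hG = α := by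
  ext1 <;> simp [rev, Q.inv_inv]

theorem k3 (hG : IsGraph Q V E) (hgood : Good Q E) (α : Arc Q V E) : 3 * α.k < α.n := by
  by_contra hcon
  obtain ⟨ζ, h0, h1, h2⟩ := α.path
  have h3 := good_at hgood α.rel h2 (by omega)
  have h4 := closed_of_path hG h2 le_rfl (by have := α.hk; omega) h3 (d := 0)
    (by have := α.hk; omega) le_rfl
  obtain ⟨ξ, g0, g1, g2⟩ := h4
  have := g2 0
  rw [g0, h0] at this
  exact α.out _ (by simpa using this)

theorem kuniq (hG : IsGraph Q V E) {α β : Arc Q V E} (hv : α.v = β.v) (hf : α.f = β.f) :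
    β.k ≤ α.k := by
  by_contra hcon
  obtain ⟨ζ, h0, h1, h2⟩ := α.path
  obtain ⟨ξ, g0, g1, g2⟩ := β.path
  have hk := α.hk
  rw [hf] at h2
  have h5 := path_agree hG h2 (fun i h h' => g2 i (by omega) h') (c := 0) (by omega) le_rfl
    (by rw [h0, g0, hv]) (-α.k) le_rfl (by omega)
  have := g2 (-α.k - 1) (by omega) (by omega)
  rw [sub_add_cancel, ← h5, h1, ← hf] at this
  exact α.inn _ this

theorem uniq (hG : IsGraph Q V E) {α β : Arc Q V E} (hv : α.v = β.v) (hf : α.f = β.f)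
    (hn : α.n = β.n) : α = β := by
  have hk : α.k = β.k := le_antisymm (kuniq hG hv.symm hf.symm) (kuniq hG hv hf)
  obtain ⟨ζ, h0, h1, h2⟩ := α.path
  obtain ⟨ξ, g0, g1, g2⟩ := β.path
  rw [hf] at h2
  rw [← hk] at g2 g1
  have hk0 := α.hk
  have h5 := path_agree hG h2 g2 (c := 0) (by omega) le_rfl
    (by rw [h0, g0, hv]) (-α.k) le_rfl (by omega)
  ext1
  · exact hv
  · rw [← h1, ← g1, h5]
  · exact hf
  · exact hn
  · exact hk

end Arc

/-! ### the extension -/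

def pre (f : ℤ → A) (i : ℤ) : ℤ → Option A := fun j => if 0 ≤ j ∧ j < i then some (f j) else none

theorem pre_zero (f : ℤ → A) : pre f 0 = fun _ => none := by
  funext j; simp only [pre]; rw [if_neg (by omega)]

theorem pre_eq {f g : ℤ → A} {i j : ℤ} (hi : 0 ≤ i) (hj : 0 ≤ j) (h : pre f i = pre g j) :
    i = j ∧ ∀ t, 0 ≤ t → t < i → f t = g t := by
  have hij : i = j := by
    rcases lt_trichotomy i j with h1 | h1 | h1
    · have := congrFun h i
      simp [pre, hi, h1] at this
    · exact h1
    · have := congrFun h j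
      simp [pre, hj, h1] at this
  refine ⟨hij, fun t h0 h1 => ?_⟩
  have := congrFun h t
  simpa [pre, h0, h1, hij ▸ h1] using this

theorem pre_congr {f g : ℤ → A} {i : ℤ} (h : ∀ t, 0 ≤ t → t < i → f t = g t) :
    pre f i = pre g i := by
  funext j; simp only [pre]; split_ifs with h1
  · rw [h j h1.1 h1.2]
  · rfl

structure Ctx (Q : RelSys A) (V : Set Z) (E : Z → A → Z → Prop)
    (e : Z → (ℤ → Option A) → Z) : Prop where
  hG : IsGraph Q V E
  good : Good Q E
  e0 : ∀ v ∈ V, e v (fun _ => none) = v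
  inj : ∀ v ∈ V, ∀ w ∈ V, ∀ p q, e v p = e w q → v = w ∧ p = q

variable {e : Z → (ℤ → Option A) → Z}

def X (e : Z → (ℤ → Option A) → Z) (α : Arc Q V E) (i : ℤ) : Z := e α.v (pre α.f i)

noncomputable def pt (C : Ctx Q V E e) (α : Arc Q V E) (i : ℤ) : Z :=
  if 2 * i < α.n - α.k then X e α i
  else if α.n - α.k < 2 * i then X e (α.rev C.hG) (α.n - α.k - i)
  else (Quot.out s(X e α i, X e (α.rev C.hG) (α.n - α.k - i))).1

theorem pt_rev (C : Ctx Q V E e) (α : Arc Q V E) (i : ℤ) :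
    pt C (α.rev C.hG) (α.n - α.k - i) = pt C α i := by
  have h1 : (α.rev C.hG).n = α.n := rfl
  have h2 : (α.rev C.hG).k = α.k := rfl
  unfold pt
  rw [Arc.rev_rev, h1, h2, show α.n - α.k - (α.n - α.k - i) = i by ring]
  split_ifs with h3 h4 h5 h6
  all_goals first | omega | rfl | skip
  rw [Sym2.eq_swap]

theorem pt_lt (C : Ctx Q V E e) (α : Arc Q V E) {i : ℤ} (h : 2 * i < α.n - α.k) :
    pt C α i = X e α i := by
  rw [pt, if_pos h]

theorem pt_cases (C : Ctx Q V E e) (α : Arc Q V E) (i : ℤ) :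
    (pt C α i = X e α i ∧ 2 * i ≤ α.n - α.k) ∨
    (pt C α i = X e (α.rev C.hG) (α.n - α.k - i) ∧ α.n - α.k ≤ 2 * i) := by
  unfold pt
  split_ifs with h3 h4
  · left; exact ⟨rfl, by omega⟩
  · right; exact ⟨rfl, by omega⟩
  · have := Sym2.out_fst_mem s(X e α i, X e (α.rev C.hG) (α.n - α.k - i))
    rw [Sym2.mem_iff] at this
    rcases this with h | h
    · left; exact ⟨h, by omega⟩
    · right; exact ⟨h, by omega⟩

theorem X_eq (C : Ctx Q V E e) {α β : Arc Q V E} {i j : ℤ} (hi : 0 ≤ i) (hj : 0 ≤ j)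
    (h : X e α i = X e β j) : α.v = β.v ∧ i = j ∧ ∀ t, 0 ≤ t → t < i → α.f t = β.f t := by
  obtain ⟨h1, h2⟩ := C.inj _ α.hv _ β.hv _ _ h
  exact ⟨h1, pre_eq hi hj h2⟩

theorem arc_small (C : Ctx Q V E e) {α β : Arc Q V E} (hv : α.v = β.v) {l : ℤ}
    (h : ∀ t, 0 ≤ t → t < l → α.f t = β.f t) : α = β ∨ (6 * l < α.n ∧ 6 * l < β.n) := by
  rcases Q.small α.rel β.rel l h with ⟨h1, h2⟩ | h1
  · left; exact Arc.uniq C.hG hv h1 h2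
  · right; exact h1

theorem X_congr {α β : Arc Q V E} (hv : α.v = β.v) {l : ℤ}
    (h : ∀ t, 0 ≤ t → t < l → α.f t = β.f t) : X e α l = X e β l := by
  rw [X, X, hv, pre_congr h]

theorem X_zero (C : Ctx Q V E e) (α : Arc Q V E) : X e α 0 = α.v := by
  rw [X, pre_zero, C.e0 _ α.hv]

theorem pt_zero (C : Ctx Q V E e) (α : Arc Q V E) : pt C α 0 = α.v := by
  have := α.k3 C.hG C.good
  have := α.hk
  rw [pt_lt C α (by omega), X_zero C]

theorem pt_end (C : Ctx Q V E e) (α : Arc Q V E) : pt C α (α.n - α.k) = α.v' := by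
  rw [← pt_rev, sub_self, pt_zero]; rfl

/-- key: consistency of edges -/
theorem pt_step (C : Ctx Q V E e) {α β : Arc Q V E} {i j : ℤ} (hi : 0 ≤ i) (hj : 0 ≤ j)
    (hi' : i < α.n - α.k) (hj' : j < β.n - β.k) (h : pt C α i = pt C β j)
    (hf : α.f i = β.f j) : pt C α (i + 1) = pt C β (j + 1) := by
  have hXY : ∀ {α β : Arc Q V E} {i j : ℤ}, 0 ≤ i → 0 ≤ j → i < α.n - α.k →
      j < β.n - β.k → α.f i = β.f j → 
      X e α i = X e (β.rev C.hG) (β.n - β.k - j) → False := by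
    intro α β i j hi hj hi' hj' hf h
    obtain ⟨hv, hij, ha⟩ := X_eq C hi (by omega) h
    have h1 := ha (i - 1) (by omega) (by omega)
    have h2 : (β.rev C.hG).f (i - 1) = Q.inv (β.f j) := by
      change Q.inv (β.f (β.n - β.k - 1 - (i - 1))) = _
      congr 2; omega
    have h3 := Q.red α.rel (i - 1)
    rw [sub_add_cancel, h1, h2, Q.inv_inv] at h3
    exact h3 hf
  rcases pt_cases C α i with ⟨ha, ha'⟩ | ⟨ha, ha'⟩ <;>
  rcases pt_cases C β j with ⟨hb, hb'⟩ | ⟨hb, hb'⟩ <;> rw [ha, hb] at h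
  · obtain ⟨hv, hij, hag⟩ := X_eq C hi hj h
    subst hij
    have hag' : ∀ t, 0 ≤ t → t < i + 1 → α.f t = β.f t := by
      intro t h0 h1
      rcases eq_or_ne t i with rfl | h2
      · exact hf
      · exact hag t h0 (by omega)
    rcases arc_small C hv hag' with h1 | ⟨h1, h2⟩
    · rw [h1]
    · have := α.k3 C.hG C.good
      have := β.k3 C.hG C.good
      rw [pt_lt C α (by omega), pt_lt C β (by omega), X_congr hv hag']
  · exact (hXY hi hj hi' hj' hf h).elim
  · exact (hXY hj hi hj' hi' hf.symm h.symm).elim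
  · obtain ⟨hv, hij, hag⟩ := X_eq C (by omega) (by omega) h
    rw [← pt_rev, ← pt_rev C β, pt_lt, pt_lt]
    · rw [show β.n - β.k - (j + 1) = α.n - α.k - (i + 1) by omega]
      exact X_congr hv (fun t h0 h1 => hag t h0 (by omega))
    · change 2 * _ < β.n - β.k; omega
    · change 2 * _ < α.n - α.k; omega

def E' (C : Ctx Q V E e) (x : Z) (a : A) (y : Z) : Prop :=
  E x a y ∨ ∃ (α : Arc Q V E) (i : ℤ), 0 ≤ i ∧ i < α.n - α.k ∧ x = pt C α i ∧ a = α.f i ∧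
    y = pt C α (i + 1)

theorem pt_mem_V (C : Ctx Q V E e) {α : Arc Q V E} {i : ℤ} (h0 : 0 ≤ i) (h1 : i ≤ α.n - α.k)
    (h : pt C α i ∈ V) : i = 0 ∨ i = α.n - α.k := by
  have key : ∀ (α : Arc Q V E) (i : ℤ), 0 ≤ i → X e α i ∈ V → i = 0 := by
    intro α i h0 h
    have h1 : e α.v (pre α.f i) = e (X e α i) (pre α.f 0) := by
      rw [pre_zero, C.e0 _ h]; rfl
    exact (pre_eq h0 le_rfl (C.inj _ α.hv _ h _ _ h1).2).1
  rcases pt_cases C α i with ⟨ha, ha'⟩ | ⟨ha, ha'⟩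
  · left; exact key α i h0 (ha ▸ h)
  · right
    have := key _ _ (by omega) (ha ▸ h)
    omega

theorem E'_graph (C : Ctx Q V E e) {V' : Set Z} (hV : V ⊆ V') (hV' : ∀ v ∈ V, ∀ p, e v p ∈ V') :
    IsGraph Q V' (E' C) := by
  have hpt : ∀ α i, pt C α i ∈ V' := by
    intro α i
    rcases pt_cases C α i with ⟨ha, -⟩ | ⟨ha, -⟩ <;> rw [ha]
    · exact hV' _ α.hv _
    · exact hV' _ (α.rev C.hG).hv _
  have hnot : ∀ {x a y} (α : Arc Q V E) (i : ℤ), E x a y → 0 ≤ i → i < α.n - α.k → x = pt C α i →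
      a = α.f i → False := by
    intro x a y α i h h0 h1 hx ha
    rcases pt_mem_V C h0 h1.le (hx ▸ C.hG.suppl h) with h2 | h2
    · subst h2
      rw [pt_zero] at hx
      subst hx ha
      exact α.out _ h
    · omega
  refine ⟨?_, ?_, ?_, ?_⟩
  · rintro x a y (h | ⟨α, i, h0, h1, rfl, rfl, rfl⟩)
    · exact hV (C.hG.suppl h)
    · exact hpt _ _
  · rintro x a y (h | ⟨α, i, h0, h1, rfl, rfl, rfl⟩)
    · exact hV (C.hG.suppr h)
    · exact hpt _ _
  · rintro x a y (h | ⟨α, i, h0, h1, rfl, rfl, rfl⟩)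
    · exact Or.inl (C.hG.symm h)
    · refine Or.inr ⟨α.rev C.hG, α.n - α.k - (i + 1), by omega, ?_, ?_, ?_, ?_⟩
      · change _ < α.n - α.k; omega
      · rw [pt_rev]
      · change _ = Q.inv (α.f (α.n - α.k - 1 - _))
        congr 2; ring
      · rw [← pt_rev]; congr 1; ring
  · rintro x a y y' (h | ⟨α, i, h0, h1, hx, ha, rfl⟩) (h' | ⟨β, j, g0, g1, gx, ga, rfl⟩)
    · exact C.hG.det h h'
    · exact (hnot _ _ h g0 g1 gx ga).elim
    · exact (hnot _ _ h' h0 h1 hx ha).elim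
    · exact pt_step C h0 g0 h1 g1 (hx ▸ gx) (ha ▸ ga)

/-- All relators at old vertices close up. -/
theorem E'_closed (C : Ctx Q V E e) (hG' : IsGraph Q Set.univ (E' C)) {v : Z} (hv : v ∈ V)
    {f : ℤ → A} {n : ℤ} (hr : Q.Rel f n) : Closed (E' C) f n v := by
  by_cases hc : Closed E f n v
  · obtain ⟨ζ, h0, h1, h2⟩ := hc
    exact ⟨ζ, h0, h1, fun i => Or.inl (h2 i)⟩
  have hn := Q.pos hr
  -- a path on `[a,b]` through `v` in `E` is short
  have hshort : ∀ (ζ : ℤ → Z) (a b : ℤ), a ≤ 0 → 0 ≤ b → ζ 0 = v → PathOn E f a b ζ →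
      3 * (b - a) < n := by
    intro ζ a b ha hb h0 hp
    by_contra hcon
    have h1 := good_at C.good hr hp (by omega)
    have h2 := closed_of_path C.hG hp le_rfl (by omega) h1 (d := 0) ha hb
    rw [h0] at h2
    exact hc (by simpa using h2)
  -- maximal forward
  obtain ⟨b, ⟨hb0, ζ, hζ0, hζ⟩, hbmax⟩ := Int.exists_greatest_of_bdd
    (P := fun b => 0 ≤ b ∧ ∃ ζ : ℤ → Z, ζ 0 = v ∧ PathOn E f 0 b ζ)
    ⟨n, fun z ⟨hz, ζ, h0, h1⟩ => by have := hshort ζ 0 z le_rfl hz h0 h1; omega⟩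
    ⟨0, le_rfl, fun _ => v, rfl, fun i _ _ => by omega⟩
  obtain ⟨k, ⟨hk0, ξ, hξ0, hξ⟩, hkmax⟩ := Int.exists_greatest_of_bdd
    (P := fun k => 0 ≤ k ∧ ∃ ζ : ℤ → Z, ζ 0 = v ∧ PathOn E f (-k) b ζ)
    ⟨n, fun z ⟨hz, ζ, h0, h1⟩ => by
      have := hshort ζ (-z) b (by omega) hb0 h0 h1; omega⟩
    ⟨0, le_rfl, ζ, hζ0, by simpa using hζ⟩
  have hend : ξ b ∈ V ∧ ξ (-k) ∈ V := by
    constructor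
    · rcases hb0.eq_or_lt with h | h
      · rw [← h, hξ0]; exact hv
      · have := C.hG.suppr (hξ (b - 1) (by omega) (by omega))
        rwa [sub_add_cancel] at this
    · rcases hk0.eq_or_lt with h | h
      · rw [← h, neg_zero, hξ0]; exact hv
      · exact C.hG.suppl (hξ (-k) le_rfl (by omega))
  let α : Arc Q V E :=
    { v := ξ b, v' := ξ (-k), f := fun i => f (i + b), n := n, k := k + b
      rel := Q.shift hr b
      hk := by omega
      hv := hend.1
      hv' := hend.2
      path := by
        refine ⟨fun i => ξ (i + b), by simp, ?_, ?_⟩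
        · change ξ _ = _
          congr 1; ring
        · intro i h0 h1
          have := hξ (i + b) (by omega) (by omega)
          change E (ξ (i + b)) (f (i + b)) (ξ (i + 1 + b))
          rwa [show i + 1 + b = i + b + 1 by ring]
      out := by
        intro w hw
        simp only [zero_add] at hw
        have := hbmax (b + 1) ⟨by omega, fun i => if i ≤ b then ξ i else w, by simp [hb0, hξ0], by
          intro i h0 h1
          rcases eq_or_ne i b with rfl | h2
          · simpa using hw
          · have := hξ i (by omega) (by omega)
            simpa [show i ≤ b by omega, show i + 1 ≤ b by omega] using this⟩
        omega
      inn := by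
        intro w hw
        have := hkmax (k + 1) ⟨by omega, fun i => if -k ≤ i then ξ i else w, by simp [hk0, hξ0], by
          intro i h0 h1
          rcases eq_or_ne i (-k - 1) with rfl | h2
          · rw [show -(k + b) - 1 + b = -k - 1 by ring] at hw
            simpa using hw
          · have := hξ i (by omega) (by omega)
            simpa [show -k ≤ i by omega, show -k ≤ i + 1 by omega] using this⟩
        omega }
  have hαk := α.k3 C.hG C.good
  have hloop : Closed (E' C) (fun i => f (i + b)) n (ξ b) := by
    have := closed_of_loop (E := E' C) hn (f := fun i => f (i + b)) (Q.per (Q.shift hr b))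
      (ζ := fun i => if i ≤ n - (k + b) then pt C α i else ξ (i + b - n)) (by
        intro i h0 h1
        beta_reduce
        change 3 * (k + b) < n at hαk
        by_cases h2 : i < n - (k + b)
        · rw [if_pos h2.le, if_pos (by omega)]
          exact Or.inr ⟨α, i, h0, h2, rfl, rfl, rfl⟩
        · have h3 : (if i ≤ n - (k + b) then pt C α i else ξ (i + b - n)) = ξ (i + b - n) := by
            split_ifs with h4
            · rw [show i = α.n - α.k by change i = n - (k + b); omega, pt_end]
              change ξ (-k) = ξ (n - (k + b) + b - n)
              congr 1; ring
            · rfl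
          rw [h3, if_neg (by omega)]
          have h4 := hξ (i + b - n) (by omega) (by omega)
          left
          rw [← Q.per hr (i + b - n), sub_add_cancel] at h4
          rwa [show i + b - n + 1 = i + 1 + b - n by ring] at h4) (by
        change 3 * (k + b) < n at hαk
        have h5 : (0:ℤ) ≤ n - (k + b) := by omega
        rw [if_pos h5, pt_zero]
        split_ifs with h
        · have h6 : k + b = 0 := by omega
          have h7 : n = α.n - α.k := by change n = n - (k + b); omega
          rw [h7, pt_end]
          change ξ (-k) = ξ b
          congr 1; omega
        · change _ = ξ b
          congr 1; ring)
    rwa [if_pos (by change 3 * (k + b) < n at hαk; omega), pt_zero] at this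
  have hξ' : PathOn (E' C) f (-k) b ξ := fun i h h' => Or.inl (hξ i h h')
  have := closed_of_path hG' hξ' (c := b) (by omega) le_rfl hloop (d := 0) (by omega) hb0
  rw [hξ0] at this
  simpa using this

/-! ### extension of Lipschitz functions -/

noncomputable def cl (α : Arc Q V E) (i : ℤ) : ℝ :=
  max 0 (min 1 (((6 * i - α.n : ℤ) : ℝ) / ((4 * α.n - 6 * α.k : ℤ) : ℝ)))

noncomputable def val (h : Z → ℝ) (α : Arc Q V E) (i : ℤ) : ℝ :=
  h α.v + (h α.v' - h α.v) * cl α i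

theorem cl_zero (C : Ctx Q V E e) (α : Arc Q V E) {i : ℤ} (hi : 6 * i ≤ α.n) : cl α i = 0 := by
  have h3 := α.k3 C.hG C.good
  have h0 := Q.pos α.rel
  have h1 : (0:ℝ) < ((4 * α.n - 6 * α.k : ℤ) : ℝ) := by exact_mod_cast (by omega)
  have h2 : ((6 * i - α.n : ℤ) : ℝ) ≤ 0 := by exact_mod_cast (by omega)
  unfold cl
  apply max_eq_left
  exact (min_le_right _ _).trans (div_nonpos_of_nonpos_of_nonneg h2 h1.le)

theorem cl_rev (C : Ctx Q V E e) (α : Arc Q V E) (i : ℤ) :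
    cl (α.rev C.hG) (α.n - α.k - i) = 1 - cl α i := by
  have h3 := α.k3 C.hG C.good
  have h0 := Q.pos α.rel
  have h1 : (0:ℝ) < ((4 * α.n - 6 * α.k : ℤ) : ℝ) := by exact_mod_cast (by omega)
  have h2 : ((6 * (α.n - α.k - i) - α.n : ℤ) : ℝ) / ((4 * α.n - 6 * α.k : ℤ) : ℝ) =
    1 - ((6 * i - α.n : ℤ) : ℝ) / ((4 * α.n - 6 * α.k : ℤ) : ℝ) := by
    field_simp
    push_cast
    ring
  change max 0 (min 1 (((6 * (α.n - α.k - i) - α.n : ℤ) : ℝ) / ((4 * α.n - 6 * α.k : ℤ) : ℝ))) = _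
  rw [h2, cl]
  generalize ((6 * i - α.n : ℤ) : ℝ) / ((4 * α.n - 6 * α.k : ℤ) : ℝ) = x
  rcases le_total 0 x with h | h <;> rcases le_total x 1 with h' | h'
  · rw [min_eq_right (by linarith), max_eq_right (by linarith), min_eq_right (by linarith),
      max_eq_right (by linarith)]
  · rw [min_eq_right (by linarith), max_eq_left (by linarith), min_eq_left (by linarith),
      max_eq_right (by linarith)]; ring
  · rw [min_eq_left (by linarith), max_eq_right (by linarith), min_eq_right (by linarith),
      max_eq_left (by linarith)]; ring
  · linarith

theorem val_rev (C : Ctx Q V E e) (h : Z → ℝ) (α : Arc Q V E) (i : ℤ) :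
    val h (α.rev C.hG) (α.n - α.k - i) = val h α i := by
  unfold val
  rw [cl_rev C]
  change h α.v' + (h α.v - h α.v') * _ = _
  ring

theorem val_X (C : Ctx Q V E e) (h : Z → ℝ) {α β : Arc Q V E} {i j : ℤ} (hi : 0 ≤ i) (hj : 0 ≤ j)
    (hX : X e α i = X e β j) : val h α i = val h β j := by
  obtain ⟨hv, hij, hag⟩ := X_eq C hi hj hX
  subst hij
  rcases arc_small C hv hag with h1 | ⟨h1, h2⟩
  · rw [h1]
  · unfold val
    rw [cl_zero C α h1.le, cl_zero C β h2.le, hv]; ring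

theorem val_pt (C : Ctx Q V E e) (h : Z → ℝ) {α β : Arc Q V E} {i j : ℤ} (hi : 0 ≤ i) (hj : 0 ≤ j)
    (hi' : i ≤ α.n - α.k) (hj' : j ≤ β.n - β.k)
    (hp : pt C α i = pt C β j) : val h α i = val h β j := by
  rcases pt_cases C α i with ⟨ha, -⟩ | ⟨ha, -⟩ <;>
  rcases pt_cases C β j with ⟨hb, -⟩ | ⟨hb, -⟩ <;> rw [ha, hb] at hp
  · exact val_X C h hi hj hp
  · rw [val_X C h hi (by omega) hp, val_rev C]
  · rw [← val_rev C, val_X C h (by omega) hj hp]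
  · rw [← val_rev C, val_X C h (by omega) (by omega) hp, val_rev C]

theorem lip_path {h : Z → ℝ} (hl : ∀ x a y, E x a y → |h x - h y| ≤ 1) {f : ℤ → A} {ζ : ℤ → Z}
    (k : ℕ) : ∀ a : ℤ, PathOn E f a (a + k) ζ → |h (ζ a) - h (ζ (a + k))| ≤ k := by
  induction k with
  | zero => intro a _; simp
  | succ k ih =>
    intro a hp
    have h1 := ih a (fun i h h' => hp i h (by push_cast; omega))
    have h2 := hl _ _ _ (hp (a + k) (by omega) (by push_cast; omega))
    push_cast
    rw [← add_assoc]
    have := abs_sub_le (h (ζ a)) (h (ζ (a + k))) (h (ζ (a + k + 1)))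
    linarith

theorem exists_ext (C : Ctx Q V E e) (h : Z → ℝ) (hl : ∀ x a y, E x a y → |h x - h y| ≤ 1) :
    ∃ h' : Z → ℝ, (∀ v ∈ V, h' v = h v) ∧ ∀ x a y, E' C x a y → |h' x - h' y| ≤ 1 := by
  classical
  let P : Z → ℝ → Prop := fun z r => ∃ (α : Arc Q V E) (i : ℤ), 0 ≤ i ∧ i ≤ α.n - α.k ∧
    z = pt C α i ∧ r = val h α i
  let h' : Z → ℝ := fun z => if H : ∃ r, P z r then H.choose else h z
  have hpt : ∀ (α : Arc Q V E) (i : ℤ), 0 ≤ i → i ≤ α.n - α.k → h' (pt C α i) = val h α i := by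
    intro α i h0 h1
    have H : ∃ r, P (pt C α i) r := ⟨_, α, i, h0, h1, rfl, rfl⟩
    change (if H : ∃ r, P (pt C α i) r then H.choose else h (pt C α i)) = _
    rw [dif_pos H]
    obtain ⟨β, j, g0, g1, g2, g3⟩ := H.choose_spec
    rw [g3]
    exact (val_pt C h h0 g0 h1 g1 g2).symm
  have hV : ∀ v ∈ V, h' v = h v := by
    intro v hv
    by_cases H : ∃ r, P v r
    · obtain ⟨r, α, i, h0, h1, rfl, h3⟩ := H
      rw [hpt α i h0 h1]
      have hp := Q.pos α.rel
      rcases pt_mem_V C h0 h1 hv with rfl | rfl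
      · rw [pt_zero, val, cl_zero C α (by omega)]; ring
      · rw [pt_end, ← val_rev C, val, sub_self, cl_zero C _ (by
          change _ ≤ α.n; omega)]
        change h α.v' + _ * 0 = _; ring
    · change (if H : ∃ r, P v r then H.choose else h v) = _
      rw [dif_neg H]
  refine ⟨h', hV, ?_⟩
  rintro x a y (hE | ⟨α, i, h0, h1, rfl, rfl, rfl⟩)
  · rw [hV _ (C.hG.suppl hE), hV _ (C.hG.suppr hE)]; exact hl _ _ _ hE
  · rw [hpt α i h0 h1.le, hpt α (i + 1) (by omega) (by omega)]
    have h3 := α.k3 C.hG C.good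
    have hk := α.hk
    have hd : (0:ℝ) < ((4 * α.n - 6 * α.k : ℤ) : ℝ) := by
      exact_mod_cast (by have := Q.pos α.rel; omega)
    have hvv : |h α.v' - h α.v| ≤ (α.k : ℝ) := by
      obtain ⟨ζ, g0, g1, g2⟩ := α.path
      have hkk : ((α.k.toNat : ℕ) : ℤ) = α.k := Int.toNat_of_nonneg hk
      have := lip_path hl (ζ := ζ) (f := α.f) α.k.toNat (-α.k) (by
        intro i h h'; exact g2 i h (by omega))
      rw [hkk, neg_add_cancel, g0, g1] at this
      have hkr : ((α.k.toNat : ℕ) : ℝ) = (α.k : ℝ) := by exact_mod_cast hkk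
      rwa [hkr] at this
    have hcl : |cl α i - cl α (i + 1)| ≤ 6 / ((4 * α.n - 6 * α.k : ℤ) : ℝ) := by
      unfold cl
      have hmm : ∀ x y : ℝ, |max 0 (min 1 x) - max 0 (min 1 y)| ≤ |x - y| := by
        intro x y
        refine (abs_max_sub_max_le_max 0 (min 1 x) 0 (min 1 y)).trans ?_
        refine max_le (by simp) ?_
        refine (abs_min_sub_min_le_max 1 x 1 y).trans ?_
        exact max_le (by simp) le_rfl
      refine (hmm _ _).trans ?_
      rw [← sub_div, abs_div, abs_of_pos hd]
      gcongr
      push_cast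
      rw [show (6 * (i:ℝ) - α.n - (6 * (i + 1) - α.n)) = -6 by ring]
      norm_num
    have : val h α i - val h α (i + 1) = (h α.v' - h α.v) * (cl α i - cl α (i + 1)) := by
      unfold val; ring
    rw [this, abs_mul]
    calc _ ≤ (α.k : ℝ) * (6 / ((4 * α.n - 6 * α.k : ℤ) : ℝ)) := by
            gcongr
      _ ≤ 1 := by
            rw [mul_div_assoc', div_le_one hd]
            exact_mod_cast (by omega)

/-! ### goodness of the extension -/

theorem inv_inj (Q : RelSys A) {a b : A} (h : Q.inv a = Q.inv b) : a = b := by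
  rw [← Q.inv_inv a, h, Q.inv_inv]

theorem turn (C : Ctx Q V E e) {β γ : Arc Q V E} {i i' : ℤ} (hi : 0 < i) (hi2 : i < β.n - β.k)
    (hi' : 0 ≤ i') (hi2' : i' < γ.n - γ.k) (h : pt C β i = pt C γ i')
    (hr : γ.f i' ≠ Q.inv (β.f (i - 1))) :
    (i = i' ∧ (∀ t, 0 ≤ t → t ≤ i → pt C β t = pt C γ t) ∧ (∀ t, 0 ≤ t → t < i → β.f t = γ.f t) ∧
      (γ = β ∨ 6 * i < γ.n)) ∨
    (pt C β (i + 1) = pt C γ (i' + 1) ∧ β.f i = γ.f i') ∨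
    (6 * (β.n - β.k - i) < β.n ∧ 6 * i' < γ.n) := by
  have hb3 := β.k3 C.hG C.good
  have hg3 := γ.k3 C.hG C.good
  rcases pt_cases C β i with ⟨ha, ha'⟩ | ⟨ha, ha'⟩ <;>
  rcases pt_cases C γ i' with ⟨hb, hb'⟩ | ⟨hb, hb'⟩ <;> have h' := h <;> rw [ha, hb] at h'
  · left
    obtain ⟨hv, hij, hag⟩ := X_eq C hi.le hi' h'
    rcases arc_small C hv hag with h1 | ⟨h1, h2⟩
    · subst h1
      exact ⟨hij, fun _ _ _ => rfl, fun _ _ _ => rfl, Or.inl rfl⟩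
    · refine ⟨hij, fun t h0 ht => ?_, hag, Or.inr h2⟩
      rw [pt_lt C β (by omega), pt_lt C γ (by omega)]
      exact X_congr hv (fun s hs hs' => hag s hs (by omega))
  · exfalso
    obtain ⟨hv, hij, hag⟩ := X_eq C hi.le (by omega) h'
    apply hr
    rw [hag (i - 1) (by omega) (by omega)]
    change _ = Q.inv (Q.inv (γ.f (γ.n - γ.k - 1 - (i - 1))))
    rw [Q.inv_inv]; congr 1; omega
  · right; right
    obtain ⟨hv, hij, hag⟩ := X_eq C (by omega) hi' h'
    rcases arc_small C hv hag with h1 | ⟨h1, h2⟩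
    · exfalso
      apply hr
      rw [← h1]
      change Q.inv (β.f (β.n - β.k - 1 - i')) = _
      congr 2; omega
    · exact ⟨h1, by omega⟩
  · right; left
    obtain ⟨hv, hij, hag⟩ := X_eq C (by omega) (by omega) h'
    have h1 := hag (β.n - β.k - i - 1) (by omega) (by omega)
    have h2 : β.f i = γ.f i' := by
      apply inv_inj Q
      convert h1 using 1
      · change _ = Q.inv (β.f (β.n - β.k - 1 - _))
        congr 2; ring
      · change _ = Q.inv (γ.f (γ.n - γ.k - 1 - _))
        congr 2; omega
    exact ⟨pt_step C hi.le hi' hi2 hi2' h h2, h2⟩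

structure Seg (C : Ctx Q V E e) (g : ℤ → A) (ζ : ℤ → Z) (α : Arc Q V E) (i j l : ℤ) : Prop where
  h0 : 0 ≤ i
  h1 : i + l ≤ α.n - α.k
  hz : ∀ t, 0 ≤ t → t ≤ l → ζ (j + t) = pt C α (i + t)
  hg : ∀ t, 0 ≤ t → t < l → g (j + t) = α.f (i + t)

theorem E'_good (C : Ctx Q V E e) (hG' : IsGraph Q Set.univ (E' C)) : Good Q (E' C) := by
  intro g n hr ζ m hp hnm
  by_contra hnc
  have hn := Q.pos hr
  have hback : ∀ j, 0 ≤ j → j ≤ m → ¬ Closed (E' C) (fun i => g (i + j)) n (ζ j) := by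
    intro j h0 h1 hc
    have := closed_of_path hG' hp h0 h1 hc (d := 0) le_rfl (by omega)
    exact hnc (by simpa using this)
  have hV : ∀ j, 0 ≤ j → j ≤ m → ζ j ∉ V := fun j h0 h1 hv =>
    hback j h0 h1 (E'_closed C hG' hv (Q.shift hr j))
  have hedge : ∀ j, 0 ≤ j → j < m → ∃ (α : Arc Q V E) (i : ℤ), Seg C g ζ α i j 1 := by
    intro j h0 h1
    rcases hp j h0 h1 with h | ⟨α, i, hi, hi', e1, e2, e3⟩
    · exact (hV j h0 h1.le (C.hG.suppl h)).elim
    · refine ⟨α, i, hi, by omega, fun t ht ht' => ?_, fun t ht ht' => ?_⟩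
      · rcases (by omega : t = 0 ∨ t = 1) with rfl | rfl
        · simpa using e1
        · exact e3
      · obtain rfl : t = 0 := by omega
        simpa using e2
  have hseg : ∀ {α : Arc Q V E} {i j l : ℤ}, 0 ≤ j → 0 ≤ l → j + l ≤ m → Seg C g ζ α i j l →
      6 * l < n ∧ 6 * l < α.n := by
    intro α i j l hj hl hjl hs
    rcases Q.small (Q.shift hr j) (Q.shift α.rel i) l (fun t h0 h1 => by
      have := hs.hg t h0 h1
      simpa [add_comm] using this) with ⟨h1, h2⟩ | h1
    · exfalso
      have hcl := E'_closed C hG' α.hv α.rel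
      have hpp : PathOn (E' C) α.f 0 (α.n - α.k) (pt C α) := fun t h0 h1 =>
        Or.inr ⟨α, t, h0, h1, rfl, rfl, rfl⟩
      have h3 := hs.h0
      have h4 := hs.h1
      have := closed_of_path hG' hpp (c := 0) le_rfl (by omega) (n := α.n)
        (by simpa [pt_zero] using hcl) (d := i) h3 (by omega)
      rw [← h1, ← h2] at this
      have h5 := hs.hz 0 le_rfl hl
      simp only [add_zero] at h5
      rw [← h5] at this
      exact hback j hj (by omega) this
    · exact h1
  have hstep : ∀ {β : Arc Q V E} {i j l : ℤ}, 0 ≤ j → 1 ≤ l → j + l < m → Seg C g ζ β i j l →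
      (∃ γ, Seg C g ζ γ i j (l + 1) ∧ (γ = β ∨ 6 * i < γ.n)) ∨
      (∃ γ i', Seg C g ζ γ i' (j + l) 1 ∧ 6 * (β.n - β.k - (i + l)) < β.n ∧ 6 * i' < γ.n) := by
    intro β i j l hj hl hjl hs
    have hs0 := hs.h0
    have hs1 := hs.h1
    obtain ⟨γ, i', hγ⟩ := hedge (j + l) (by omega) hjl
    have hg0 := hγ.h0
    have hg1 := hγ.h1
    have z0 := hγ.hz 0 (by omega) (by omega)
    have z1 := hγ.hz 1 (by omega) (by omega)
    have f0 := hγ.hg 0 (by omega) (by omega)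
    simp only [add_zero] at z0 f0
    have y0 := hs.hz l (by omega) le_rfl
    have hne : i + l ≠ β.n - β.k := by
      intro h
      rw [h, pt_end] at y0
      exact hV (j + l) (by omega) (by omega) (y0 ▸ β.hv')
    have hred : γ.f i' ≠ Q.inv (β.f (i + l - 1)) := by
      have h1 := Q.red hr (j + l - 1)
      rw [sub_add_cancel, f0] at h1
      have h2 := hs.hg (l - 1) (by omega) (by omega)
      rw [show j + (l - 1) = j + l - 1 by ring, show i + (l - 1) = i + l - 1 by ring] at h2
      rwa [h2] at h1
    rcases turn C (by omega) (by omega) hg0 (by omega) (y0 ▸ z0) hred with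
      ⟨e1, e2, e3, e4⟩ | ⟨e1, e2⟩ | e1
    · left
      refine ⟨γ, ⟨hs0, by omega, fun t h0 h1 => ?_, fun t h0 h1 => ?_⟩, ?_⟩
      · rcases eq_or_ne t (l + 1) with rfl | h2
        · rw [← add_assoc, z1, ← e1]; congr 1; ring
        · rw [hs.hz t h0 (by omega), e2 _ (by omega) (by omega)]
      · rcases eq_or_ne t l with rfl | h2
        · rw [f0, e1]
        · rw [hs.hg t h0 (by omega), e3 _ (by omega) (by omega)]
      · rcases e4 with e4 | e4
        · exact Or.inl e4
        · right; omega
    · left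
      refine ⟨β, ⟨hs0, by omega, fun t h0 h1 => ?_, fun t h0 h1 => ?_⟩, Or.inl rfl⟩
      · rcases eq_or_ne t (l + 1) with rfl | h2
        · rw [← add_assoc, z1, ← e1]; congr 1; ring
        · rw [hs.hz t h0 (by omega)]
      · rcases eq_or_ne t l with rfl | h2
        · rw [f0, e2]
        · rw [hs.hg t h0 (by omega)]
    · right
      exact ⟨γ, i', hγ, e1⟩
  have hinv : ∀ m', 1 ≤ m' → m' ≤ m → (∃ α i, Seg C g ζ α i 0 m') ∨
      (∃ j α i β i1, 0 ≤ j ∧ j < m' ∧ Seg C g ζ α i 0 j ∧ Seg C g ζ β i1 j (m' - j) ∧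
        6 * i1 < β.n) := by
    intro m' hm'
    induction m', hm' using Int.leInduction with
    | base => intro h; left; exact hedge 0 le_rfl (by omega)
    | succ d hd ih =>
      intro hdm
      rcases ih (by omega) with ⟨α, i, hs⟩ | ⟨j, α, i, β, i1, hj, hjd, hs, ht, hi1⟩
      · rcases hstep le_rfl hd (by omega) hs with ⟨γ, h1, -⟩ | ⟨γ, i', h1, h2, h3⟩
        · left; exact ⟨γ, i, h1⟩
        · right
          refine ⟨d, α, i, γ, i', by omega, by omega, hs, ?_, h3⟩
          rw [zero_add] at h1
          rwa [show d + 1 - d = 1 by ring]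
      · right
        rcases hstep hj (by omega) (by omega) ht with ⟨γ, h1, h2⟩ | ⟨γ, i', h1, h2, h3⟩
        · refine ⟨j, α, i, γ, i1, hj, by omega, hs, ?_, ?_⟩
          · rwa [show d + 1 - j = d - j + 1 by ring]
          · rcases h2 with rfl | h2
            · exact hi1
            · exact h2
        · exfalso
          have h4 := hseg hj (by omega) (by omega) ht
          have := β.k3 C.hG C.good
          omega
  rcases hinv m (by omega) le_rfl with ⟨α, i, hs⟩ | ⟨j, α, i, β, i1, hj, hjd, hs, ht, hi1⟩
  · have := hseg le_rfl (by omega) (by omega) hs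
    omega
  · have h1 := hseg le_rfl (by omega) (by omega) hs
    have h2 := hseg hj (by omega) (by omega) ht
    omega

/-! ### the limit -/

section Limit

variable {B : Type*}

abbrev ZZ (B A : Type*) := B × (ℕ → ℤ → Option A)

def Vn (B A : Type*) (n : ℕ) : Set (ZZ B A) := {z | ∀ i, n ≤ i → z.2 i = fun _ => none}

def en (n : ℕ) (z : ZZ B A) (p : ℤ → Option A) : ZZ B A := (z.1, Function.update z.2 n p)

theorem Vn_mono {n m : ℕ} (h : n ≤ m) : Vn B A n ⊆ Vn B A m :=
  fun _ hz i hi => hz i (h.trans hi)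

theorem en_mem {n : ℕ} {z : ZZ B A} (hz : z ∈ Vn B A n) (p : ℤ → Option A) :
    en n z p ∈ Vn B A (n + 1) := by
  intro i hi
  change Function.update z.2 n p i = _
  rw [Function.update_of_ne (by omega)]
  exact hz i (by omega)

variable (Q) in
def Stage (B : Type*) (n : ℕ) :=
  {E : ZZ B A → A → ZZ B A → Prop // IsGraph Q (Vn B A n) E ∧ Good Q E}

theorem ctx_of {n : ℕ} (S : Stage Q B n) : Ctx Q (Vn B A n) S.1 (en n) where
  hG := S.2.1
  good := S.2.2
  e0 := by
    intro v hv
    refine Prod.ext rfl ?_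
    change Function.update v.2 n _ = v.2
    rw [← hv n le_rfl, Function.update_eq_self]
  inj := by
    intro v hv w hw p q h
    have h1 : (en n v p).1 = (en n w q).1 := by rw [h]
    change v.1 = w.1 at h1
    have h2 : (en n v p).2 = (en n w q).2 := by rw [h]
    change Function.update v.2 n p = Function.update w.2 n q at h2
    refine ⟨Prod.ext h1 (funext fun i => ?_), ?_⟩
    · by_cases hi : i = n
      · subst hi; rw [hv i le_rfl, hw i le_rfl]
      · have := congrFun h2 i
        rwa [Function.update_of_ne hi, Function.update_of_ne hi] at this
    · have := congrFun h2 n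
      rwa [Function.update_self, Function.update_self] at this

def nextStage {n : ℕ} (S : Stage Q B n) : Stage Q B (n + 1) :=
  ⟨E' (ctx_of S), E'_graph _ (Vn_mono (Nat.le_succ n)) (fun _ hv p => en_mem hv p),
    E'_good _ (E'_graph _ (Set.subset_univ _) (fun _ _ _ => Set.mem_univ _))⟩

def stage (S : Stage Q B 0) : (n : ℕ) → Stage Q B n
  | 0 => S
  | n + 1 => nextStage (stage S n)

def emb (b : B) : ZZ B A := (b, fun _ _ => none)

theorem emb_mem (b : B) (n : ℕ) : emb b ∈ Vn B A n := fun _ _ => rfl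

def E0Z (E0 : B → A → B → Prop) (x : ZZ B A) (a : A) (y : ZZ B A) : Prop :=
  x = emb x.1 ∧ y = emb y.1 ∧ E0 x.1 a y.1

def stage0 (E0 : B → A → B → Prop) (hG : IsGraph Q Set.univ E0) (hgood : Good Q E0) :
    Stage Q B 0 :=
  ⟨E0Z E0, by
    refine ⟨?_, ?_, ?_, ?_⟩
    · rintro x a y ⟨h1, h2, h3⟩; rw [h1]; exact emb_mem _ _
    · rintro x a y ⟨h1, h2, h3⟩; rw [h2]; exact emb_mem _ _
    · rintro x a y ⟨h1, h2, h3⟩; exact ⟨h2, h1, hG.symm h3⟩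
    · rintro x a y y' ⟨h1, h2, h3⟩ ⟨g1, g2, g3⟩
      rw [h2, g2, hG.det h3 g3], by
    intro f n hr ζ m hp hnm
    have hn := Q.pos hr
    obtain ⟨ξ, h0, h1, h2⟩ := hgood f n hr (fun i => (ζ i).1) m (fun i hi hi' => (hp i hi hi').2.2) hnm
    refine ⟨fun i => emb (ξ i), ?_, fun i => congrArg emb (h1 i), fun i => ⟨rfl, rfl, h2 i⟩⟩
    change emb (ξ 0) = ζ 0
    rw [h0]
    exact (hp 0 le_rfl (by omega)).1.symm⟩

theorem exists_limit (E0 : B → A → B → Prop) (hG : IsGraph Q Set.univ E0) (hgood : Good Q E0) :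
    ∃ (V : Set (ZZ B A)) (E : ZZ B A → A → ZZ B A → Prop), IsGraph Q V E ∧
      (∀ v ∈ V, ∀ f n, Q.Rel f n → Closed E f n v) ∧
      (∀ b, emb b ∈ V) ∧
      (∀ x a y, E0 x a y → E (emb x) a (emb y)) ∧
      ∀ h : B → ℝ, (∀ x a y, E0 x a y → |h x - h y| ≤ 1) →
        ∃ h' : ZZ B A → ℝ, (∀ b, h' (emb b) = h b) ∧ ∀ x a y, E x a y → |h' x - h' y| ≤ 1 := by
  classical
  let St := stage (stage0 E0 hG hgood)
  have hmono1 : ∀ n x a y, (St n).1 x a y → (St (n + 1)).1 x a y := fun n x a y h => Or.inl h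
  have hmono : ∀ n m, n ≤ m → ∀ x a y, (St n).1 x a y → (St m).1 x a y := by
    intro n m h
    induction m, h using Nat.le_induction with
    | base => exact fun _ _ _ h => h
    | succ m _ ih => exact fun x a y h => hmono1 _ _ _ _ (ih x a y h)
  refine ⟨⋃ n, Vn B A n, fun x a y => ∃ n, (St n).1 x a y, ⟨?_, ?_, ?_, ?_⟩, ?_, ?_, ?_, ?_⟩
  · rintro x a y ⟨n, h⟩; exact Set.mem_iUnion.2 ⟨n, (St n).2.1.suppl h⟩
  · rintro x a y ⟨n, h⟩; exact Set.mem_iUnion.2 ⟨n, (St n).2.1.suppr h⟩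
  · rintro x a y ⟨n, h⟩; exact ⟨n, (St n).2.1.symm h⟩
  · rintro x a y y' ⟨n, h⟩ ⟨m, h'⟩
    exact (St (max n m)).2.1.det (hmono _ _ (le_max_left _ _) _ _ _ h)
      (hmono _ _ (le_max_right _ _) _ _ _ h')
  · intro v hv f n hr
    obtain ⟨k, hk⟩ := Set.mem_iUnion.1 hv
    obtain ⟨ζ, h0, h1, h2⟩ := E'_closed (ctx_of (St k))
      (E'_graph _ (Set.subset_univ _) (fun _ _ _ => Set.mem_univ _)) hk hr
    exact ⟨ζ, h0, h1, fun i => ⟨k + 1, h2 i⟩⟩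
  · intro b; exact Set.mem_iUnion.2 ⟨0, emb_mem b 0⟩
  · intro x a y h; exact ⟨0, rfl, rfl, h⟩
  · intro h hl
    let T : ℕ → Type _ := fun n => {k : ZZ B A → ℝ // ∀ x a y, (St n).1 x a y → |k x - k y| ≤ 1}
    let k0 : T 0 := ⟨fun z => h z.1, fun x a y hE => hl _ _ _ hE.2.2⟩
    let nx : ∀ n, T n → T (n + 1) := fun n k =>
      ⟨(exists_ext (ctx_of (St n)) k.1 k.2).choose,
        (exists_ext (ctx_of (St n)) k.1 k.2).choose_spec.2⟩
    have hnx : ∀ n (k : T n), ∀ v ∈ Vn B A n, (nx n k).1 v = k.1 v := fun n k =>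
      (exists_ext (ctx_of (St n)) k.1 k.2).choose_spec.1
    let ks : ∀ n, T n := fun n => Nat.rec k0 nx n
    have hks : ∀ n m, n ≤ m → ∀ v ∈ Vn B A n, (ks m).1 v = (ks n).1 v := by
      intro n m hnm
      induction m, hnm using Nat.le_induction with
      | base => exact fun _ _ => rfl
      | succ m hm ih =>
        intro v hv
        rw [← ih v hv]
        exact hnx m (ks m) v (Vn_mono hm hv)
    let h' : ZZ B A → ℝ := fun z => if H : ∃ n, z ∈ Vn B A n then (ks (Nat.find H)).1 z else 0
    have hh' : ∀ n, ∀ z ∈ Vn B A n, h' z = (ks n).1 z := by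
      intro n z hz
      have H : ∃ n, z ∈ Vn B A n := ⟨n, hz⟩
      change (if H : ∃ n, z ∈ Vn B A n then (ks (Nat.find H)).1 z else 0) = _
      rw [dif_pos H]
      exact (hks _ n (Nat.find_min' H hz) z (Nat.find_spec H)).symm
    refine ⟨h', fun b => ?_, ?_⟩
    · rw [hh' 0 _ (emb_mem b 0)]; rfl
    · rintro x a y ⟨n, hE⟩
      rw [hh' n x ((St n).2.1.suppl hE), hh' n y ((St n).2.1.suppr hE)]
      exact (ks n).2 x a y hE

end Limit

/-! ### the action -/

section Act

variable {Z : Type*} {V : Set Z} {E : Z → A → Z → Prop}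

open Classical in
noncomputable def stepFn (Q : RelSys A) (E : Z → A → Z → Prop) (a : A) (x : Z) : Z :=
  if ∃ f n, Q.Rel f n ∧ f 0 = a then (if h : ∃ y, E x a y then h.choose else x) else x

theorem stepFn_eq (hG : IsGraph Q V E) {f : ℤ → A} {n : ℤ} (hr : Q.Rel f n) (i : ℤ) {x y : Z}
    (h : E x (f i) y) : stepFn Q E (f i) x = y := by
  have h1 : ∃ g m, Q.Rel g m ∧ g 0 = f i := ⟨_, n, Q.shift hr i, by simp⟩
  have h2 : ∃ y, E x (f i) y := ⟨y, h⟩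
  rw [stepFn, if_pos h1, dif_pos h2]
  exact hG.det h2.choose_spec h

theorem stepFn_inv (hG : IsGraph Q V E) (hc : ∀ v ∈ V, ∀ f n, Q.Rel f n → Closed E f n v)
    (a : A) (x : Z) : stepFn Q E (Q.inv a) (stepFn Q E a x) = x := by
  by_cases h1 : ∃ f n, Q.Rel f n ∧ f 0 = a
  · obtain ⟨f, n, hr, rfl⟩ := h1
    have hr' := Q.rev hr 0
    by_cases hx : x ∈ V
    · obtain ⟨ζ, h0, h1, h2⟩ := hc x hx f n hr
      have h3 := h2 0
      rw [h0] at h3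
      rw [stepFn_eq hG hr 0 h3]
      have h4 := hG.symm h3
      have := stepFn_eq hG hr' 0 (x := ζ (0 + 1)) (y := x) (by simpa using h4)
      simpa using this
    · have h3 : ∀ a, ¬ ∃ y, E x a y := fun a ⟨y, hy⟩ => hx (hG.suppl hy)
      have h4 : ∀ a, stepFn Q E a x = x := by
        intro a
        rw [stepFn]; split_ifs with g1 g2
        · exact (h3 _ g2).elim
        · rfl
        · rfl
      rw [h4, h4]
  · have h2 : ¬ ∃ f n, Q.Rel f n ∧ f 0 = Q.inv a := by
      rintro ⟨f, n, hr, h⟩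
      exact h1 ⟨_, n, Q.rev hr 0, by simp [h, Q.inv_inv]⟩
    rw [stepFn, if_neg h2, stepFn, if_neg h1]

theorem stepFn_lip {h : Z → ℝ} (hl : ∀ x a y, E x a y → |h x - h y| ≤ 1) (a : A) (x : Z) :
    |h x - h (stepFn Q E a x)| ≤ 1 := by
  rw [stepFn]
  split_ifs with h1 h2
  · exact hl _ _ _ h2.choose_spec
  · simp
  · simp

theorem stepFn_notMem (hG : IsGraph Q V E) {x : Z} (hx : x ∉ V) (a : A) : stepFn Q E a x = x := by
  rw [stepFn]; split_ifs with g1 g2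
  · exact (hx (hG.suppl g2.choose_spec)).elim
  · rfl
  · rfl

noncomputable def run (Q : RelSys A) (E : Z → A → Z → Prop) (w : List A) (x : Z) : Z :=
  w.foldl (fun x a => stepFn Q E a x) x

theorem run_lip {h : Z → ℝ} (hl : ∀ x a y, E x a y → |h x - h y| ≤ 1) (w : List A) :
    ∀ x, |h x - h (run Q E w x)| ≤ w.length := by
  induction w with
  | nil => intro x; simp [run]
  | cons a w ih =>
    intro x
    have h1 := stepFn_lip (Q := Q) hl a x
    have h2 := ih (stepFn Q E a x)
    have h3 := abs_sub_le (h x) (h (stepFn Q E a x)) (h (run Q E w (stepFn Q E a x)))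
    change |h x - h (run Q E w (stepFn Q E a x))| ≤ _
    rw [List.length_cons]
    push_cast
    linarith

theorem run_path (hG : IsGraph Q V E) {f : ℤ → A} {n : ℤ} (hr : Q.Rel f n) {ζ : ℤ → Z}
    (he : ∀ i, E (ζ i) (f i) (ζ (i + 1))) (k : ℕ) :
    run Q E ((List.range k).map fun j : ℕ => f j) (ζ 0) = ζ k := by
  induction k with
  | zero => simp [run]
  | succ k ih =>
    rw [List.range_succ, List.map_append, run, List.foldl_append]
    unfold run at ih
    rw [ih]
    simp only [List.map_cons, List.map_nil, List.foldl_cons, List.foldl_nil]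
    rw [stepFn_eq hG hr k (he k)]
    simp

theorem run_rel (hG : IsGraph Q V E) (hc : ∀ v ∈ V, ∀ f n, Q.Rel f n → Closed E f n v)
    {f : ℤ → A} {n : ℕ} (hr : Q.Rel f n) (x : Z) :
    run Q E ((List.range n).map fun j : ℕ => f j) x = x := by
  by_cases hx : x ∈ V
  · obtain ⟨ζ, h0, h1, h2⟩ := hc x hx f n hr
    have := run_path hG hr h2 n
    rw [← h0, this, ← h1 0, zero_add]
  · have : ∀ w : List A, run Q E w x = x := by
      intro w
      induction w with
      | nil => rfl
      | cons a w ih =>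
        change run Q E w (stepFn Q E a x) = x
        rw [stepFn_notMem hG hx, ih]
    exact this _

end Act

/-! ### the cycle -/

section Cycle

variable {f : ℤ → A} {n : ℕ}

def cycE (Q : RelSys A) (f : ℤ → A) (n : ℕ) (x : ZMod n) (a : A) (y : ZMod n) : Prop :=
  ∃ i : ℤ, (x = i ∧ y = i + 1 ∧ a = f i) ∨ (x = i + 1 ∧ y = i ∧ a = Q.inv (f i))

theorem per_zmod (hr : Q.Rel f n) {i j : ℤ} (h : (i : ZMod n) = j) : f i = f j := by
  have hn := Q.pos hr
  have hper : ∀ (k : ℕ) i, f (i + k * n) = f i := by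
    intro k
    induction k with
    | zero => simp
    | succ k ih =>
      intro i
      rw [← ih i, ← Q.per hr (i + k * n)]; congr 1; push_cast; ring
  rw [ZMod.intCast_eq_intCast_iff_dvd_sub] at h
  obtain ⟨c, hc⟩ := h
  rcases le_total 0 c with h3 | h3
  · obtain ⟨k, rfl⟩ := Int.eq_ofNat_of_zero_le h3
    rw [← hper k i]; congr 1; linarith
  · obtain ⟨k, hk⟩ := Int.eq_ofNat_of_zero_le (neg_nonneg.2 h3)
    rw [← hper k j]; congr 1; rw [← hk]; linarith

theorem cyc_graph (hr : Q.Rel f n) : IsGraph Q Set.univ (cycE Q f n) := by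
  refine ⟨fun _ => trivial, fun _ => trivial, ?_, ?_⟩
  · rintro x a y ⟨i, ⟨rfl, rfl, rfl⟩ | ⟨rfl, rfl, rfl⟩⟩
    · exact ⟨i, Or.inr ⟨rfl, rfl, rfl⟩⟩
    · exact ⟨i, Or.inl ⟨rfl, rfl, Q.inv_inv _⟩⟩
  · rintro x a y y' ⟨i, ⟨rfl, rfl, rfl⟩ | ⟨rfl, rfl, rfl⟩⟩ ⟨j, ⟨g1, rfl, g3⟩ | ⟨g1, rfl, g3⟩⟩
    · rw [g1]
    · exfalso
      apply Q.red hr j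
      rw [← g3]
      exact (per_zmod hr (by push_cast; exact g1)).symm
    · exfalso
      apply Q.red hr i
      rw [g3]
      exact per_zmod hr (by push_cast; exact g1)
    · exact add_right_cancel g1

theorem cyc_good (hr : Q.Rel f n) : Good Q (cycE Q f n) := by
  intro g m hg ζ l hp hl
  have hm := Q.pos hg
  have hG := cyc_graph hr
  -- a monotone path along `F`, with all edges present, determines everything
  have key : ∀ (F : ℤ → A) (ξ : ℤ → ZMod n), Q.Rel F n → (∀ i, ξ (i + n) = ξ i) →
      (∀ i, cycE Q f n (ξ i) (F i) (ξ (i + 1))) → ζ 0 = ξ 0 → g 0 = F 0 →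
      (∀ i a y, cycE Q f n (ξ i) a y → a = F i ∨ a = Q.inv (F (i - 1))) →
      Closed (cycE Q f n) g m (ζ 0) := by
    intro F ξ hF hper he h0 hg0 hall
    have hag : ∀ d, 1 ≤ d → d ≤ l → ζ d = ξ d ∧ ∀ i, 0 ≤ i → i < d → g i = F i := by
      intro d hd
      induction d, hd using Int.leInduction with
      | base =>
        intro h1
        refine ⟨?_, fun i hi hi' => ?_⟩
        · have e1 := hp 0 le_rfl (by omega)
          have e2 := he 0
          rw [h0, hg0] at e1
          exact hG.det e1 e2
        · obtain rfl : i = 0 := by omega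
          exact hg0
      | succ d hd ih =>
        intro h1
        obtain ⟨i1, i2⟩ := ih (by omega)
        have e1 := hp d (by omega) (by omega)
        rw [i1] at e1
        have e3 : g d = F d := by
          rcases hall _ _ _ e1 with h | h
          · exact h
          · exfalso
            have := Q.red hg (d - 1)
            rw [sub_add_cancel, h, i2 (d - 1) (by omega) (by omega)] at this
            exact this rfl
        refine ⟨?_, fun i hi hi' => ?_⟩
        · rw [e3] at e1
          exact hG.det e1 (he d)
        · rcases eq_or_ne i d with rfl | h
          · exact e3
          · exact i2 i hi (by omega)
    rcases Q.small hg hF l (hag l (by omega) le_rfl).2 with ⟨h1, h2⟩ | h1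
    · rw [h0, h1, h2]
      exact ⟨ξ, rfl, hper, he⟩
    · omega
  obtain ⟨i, ⟨h1, h2, h3⟩ | ⟨h1, h2, h3⟩⟩ := hp 0 le_rfl (by omega)
  · refine key (fun t => f (t + i)) (fun t => ((t + i : ℤ) : ZMod n)) (Q.shift hr i) ?_ ?_ ?_ ?_ ?_
    · intro t; simp
    · intro t; exact ⟨t + i, Or.inl ⟨rfl, by push_cast; ring, rfl⟩⟩
    · simpa using h1
    · simpa using h3
    · rintro t a y ⟨j, ⟨g1, g2, g3⟩ | ⟨g1, g2, g3⟩⟩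
      · left; rw [g3]; exact (per_zmod hr g1).symm
      · right; rw [g3]; congr 1
        refine (per_zmod hr ?_).symm
        push_cast at g1 ⊢
        linear_combination g1
  · refine key (fun t => Q.inv (f (i - t))) (fun t => ((i + 1 - t : ℤ) : ZMod n)) (Q.rev hr i)
      ?_ ?_ ?_ ?_ ?_
    · intro t; simp
    · intro t; exact ⟨i - t, Or.inr ⟨by push_cast; ring, by push_cast; ring, rfl⟩⟩
    · simpa using h1
    · simpa using h3
    · rintro t a y ⟨j, ⟨g1, g2, g3⟩ | ⟨g1, g2, g3⟩⟩
      · right; rw [g3, Q.inv_inv]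
        refine (per_zmod hr ?_).symm
        push_cast at g1 ⊢
        linear_combination g1
      · left; rw [g3]; congr 1
        refine (per_zmod hr ?_).symm
        push_cast at g1 ⊢
        linear_combination g1

/-- Cyclic distance. -/
def cdist (n : ℕ) (d : ℤ) : ℕ := (d : ZMod n).valMinAbs.natAbs

/-- Main result of the abstract part. -/
theorem main.{u} {A : Type u} {Q : RelSys A} {f : ℤ → A} {n : ℕ} (hr : Q.Rel f n) :
    ∃ (Z : Type u) (act : A → Z → Z) (ζ : ℤ → Z),
      (∀ a x, act (Q.inv a) (act a x) = x) ∧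
      (∀ (g : ℤ → A) (m : ℕ), Q.Rel g m → ∀ x,
        ((List.range m).map fun j : ℕ => g j).foldl (fun x a => act a x) x = x) ∧
      (∀ i, act (f i) (ζ i) = ζ (i + 1)) ∧
      ∀ (w : List A) (i j : ℤ), w.foldl (fun x a => act a x) (ζ i) = ζ j →
        cdist n (j - i) ≤ w.length := by
  obtain ⟨V, E, hG, hc, hV, hE, hL⟩ := exists_limit (cycE Q f n) (cyc_graph hr) (cyc_good hr)
  refine ⟨ZZ (ZMod n) A, stepFn Q E, fun i => emb (i : ZMod n), stepFn_inv hG hc, fun g m hg x =>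
    run_rel hG hc hg x, fun i => ?_, fun w i j h => ?_⟩
  · apply stepFn_eq hG hr
    apply hE
    exact ⟨i, Or.inl ⟨rfl, by push_cast; rfl, rfl⟩⟩
  · have h1 : ∀ x : ZMod n, (x + 1).valMinAbs.natAbs ≤ x.valMinAbs.natAbs + 1 ∧
        x.valMinAbs.natAbs ≤ (x + 1).valMinAbs.natAbs + 1 := by
      have hpos : 0 < n := by have := Q.pos hr; omega
      have h10 : (1 : ZMod n).valMinAbs.natAbs ≤ 1 := by
        rcases Nat.lt_or_ge n 2 with h | h
        · obtain rfl : n = 1 := by omega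
          rw [Subsingleton.elim (1 : ZMod 1) 0]; simp
        · have := ZMod.valMinAbs_natCast_of_le_half (n := n) (a := 1) (by omega)
          rw [Nat.cast_one] at this
          rw [this]; simp
      have h11 : (-1 : ZMod n).valMinAbs.natAbs ≤ 1 := by
        rw [ZMod.natAbs_valMinAbs_neg]; exact h10
      intro x
      have a1 := ZMod.natAbs_valMinAbs_add_le x 1
      have a2 := ZMod.natAbs_valMinAbs_add_le (x + 1) (-1)
      rw [add_neg_cancel_right] at a2
      omega
    obtain ⟨h', e1, e2⟩ := hL (fun x => ((x - (i : ZMod n)).valMinAbs.natAbs : ℝ)) (by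
      have h2 : ∀ t : ℤ, |((((t : ZMod n) - i).valMinAbs.natAbs : ℝ)) -
          ((((t : ZMod n) + 1 - i).valMinAbs.natAbs : ℝ))| ≤ 1 := by
        intro t
        obtain ⟨a, b⟩ := h1 ((t : ZMod n) - i)
        rw [show (t : ZMod n) - i + 1 = t + 1 - i by ring] at a b
        rw [abs_le]
        have a' : ((((t : ZMod n) + 1 - i).valMinAbs.natAbs : ℝ)) ≤
          (((t : ZMod n) - i).valMinAbs.natAbs : ℝ) + 1 := by exact_mod_cast a
        have b' : (((t : ZMod n) - i).valMinAbs.natAbs : ℝ) ≤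
          ((((t : ZMod n) + 1 - i).valMinAbs.natAbs : ℝ)) + 1 := by exact_mod_cast b
        constructor <;> linarith
      rintro x a y ⟨t, ⟨rfl, rfl, -⟩ | ⟨rfl, rfl, -⟩⟩
      · exact h2 t
      · rw [abs_sub_comm]; exact h2 t)
    have h3 := run_lip (Q := Q) e2 w (emb (i : ZMod n))
    unfold run at h3
    rw [h, e1, e1] at h3
    simp only [sub_self] at h3
    simp only [ZMod.valMinAbs_zero, Int.natAbs_zero, Nat.cast_zero, zero_sub, abs_neg,
      Nat.abs_cast] at h3
    unfold cdist
    push_cast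
    exact_mod_cast h3

end Cycle

end SCG

namespace SCG
open MorseLTG

section Words
variable {S : Type*}

theorem hat_idx (r : Word S) (h : 0 < r.length) (i : ℤ) :
    (i % (r.length : ℤ)).toNat < r.length := by
  have h1 := Int.emod_nonneg i (b := (r.length : ℤ)) (by omega)
  have h2 := Int.emod_lt_of_pos i (b := (r.length : ℤ)) (by omega)
  omega

def hat (r : Word S) (h : 0 < r.length) (i : ℤ) : S × Bool :=
  r[(i % (r.length : ℤ)).toNat]'(hat_idx r h i)

def linv (a : S × Bool) : S × Bool := (a.1, !a.2)

theorem linv_linv (a : S × Bool) : linv (linv a) = a := by simp [linv]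

theorem hat_eq (r : Word S) (h : 0 < r.length) (i : ℤ) (t : ℕ) (ht : t < r.length)
    (hd : (r.length : ℤ) ∣ i - t) : hat r h i = r[t] := by
  unfold hat
  congr 1
  have : i % (r.length : ℤ) = (t : ℤ) % r.length :=
    Int.emod_eq_emod_iff_emod_sub_eq_zero.2 (Int.emod_eq_zero_of_dvd hd)
  rw [this, Int.emod_eq_of_lt (by omega) (by omega)]
  simp

theorem hat_per (r : Word S) (h : 0 < r.length) {i j : ℤ} (hd : (r.length : ℤ) ∣ i - j) :
    hat r h i = hat r h j := by
  conv_rhs => unfold hat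
  apply hat_eq
  have h1 := Int.emod_nonneg j (b := (r.length : ℤ)) (by omega)
  rw [Int.toNat_of_nonneg h1]
  have h2 := Int.emod_add_mul_ediv j r.length
  rw [show i - j % r.length = (i - j) + r.length * (j / r.length) by linarith]
  exact dvd_add hd (dvd_mul_right _ _)

theorem hat_nat (r : Word S) (h : 0 < r.length) (t : ℕ) (ht : t < r.length) :
    hat r h t = r[t] := hat_eq r h t t ht (by simp)

theorem wordInv_length (r : Word S) : (wordInv r).length = r.length := by simp [wordInv]

theorem hat_wordInv (r : Word S) (h : 0 < r.length) (h' : 0 < (wordInv r).length) (j : ℤ) :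
    hat (wordInv r) h' j = linv (hat r h (-1 - j)) := by
  have h1 := Int.emod_nonneg j (b := (r.length : ℤ)) (by omega)
  have h2 := Int.emod_lt_of_pos j (b := (r.length : ℤ)) (by omega)
  have h3 := Int.emod_add_mul_ediv j r.length
  have e1 := hat_eq (wordInv r) h' j (j % r.length).toNat
    (by rw [wordInv_length]; omega) (by
      rw [wordInv_length, Int.toNat_of_nonneg h1]
      exact ⟨j / r.length, by linarith⟩)
  have e2 := hat_eq r h (-1 - j) (r.length - 1 - (j % r.length).toNat) (by omega) (by
    refine ⟨-(j / r.length) - 1, ?_⟩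
    have : ((r.length - 1 - (j % r.length).toNat : ℕ) : ℤ) = r.length - 1 - j % r.length := by omega
    rw [this]; linarith)
  rw [e1, e2]
  simp [wordInv, linv]

def word (f : ℤ → S × Bool) (n : ℕ) : Word S := (List.range n).map fun j : ℕ => f j

theorem word_length (f : ℤ → S × Bool) (n : ℕ) : (word f n).length = n := by simp [word]

theorem word_hat (r : Word S) (h : 0 < r.length) (k : ℤ) :
    word (fun i => hat r h (i + k)) r.length = r.rotate (k % (r.length : ℤ)).toNat := by
  apply List.ext_getElem
  · simp [word]
  · intro i h1 h2
    rw [List.getElem_rotate]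
    simp only [word, List.getElem_map, List.getElem_range]
    apply hat_eq
    have h3 := Int.emod_nonneg k (b := (r.length : ℤ)) (by omega)
    push_cast
    rw [Int.toNat_of_nonneg h3]
    apply Int.dvd_of_emod_eq_zero
    simp [Int.sub_emod]

theorem word_hat0 (r : Word S) (h : 0 < r.length) : word (hat r h) r.length = r := by
  have := word_hat r h 0
  simpa using this

theorem hat_red (r : Word S) (h : 0 < r.length) (hc : CyclicallyReduced r) (i : ℤ) :
    hat r h (i + 1) ≠ linv (hat r h i) := by
  intro he
  rcases Nat.lt_or_ge 1 r.length with h1 | h1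
  · have hw := hc (i % (r.length : ℤ)).toNat
    rw [← word_hat r h i] at hw
    have := List.isChain_iff_getElem.1 hw 0 (by rw [word_length]; omega)
    simp only [word, List.getElem_map, List.getElem_range] at this
    simp only [Nat.cast_zero, zero_add, Nat.cast_one] at this
    rw [add_comm 1 i, he] at this
    simp [linv] at this
  · rw [hat_per r h (i := i + 1) (j := i)] at he
    · have := congrArg Prod.snd he
      simp [linv] at this
    · rw [show r.length = 1 by omega]; simp

def RRel (R : Set (Word S)) (f : ℤ → S × Bool) (n : ℤ) : Prop :=
  ∃ r ∈ R, ∃ h : 0 < r.length, n = r.length ∧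
    ∃ k : ℤ, (∀ i, f i = hat r h (i + k)) ∨ (∀ i, f i = linv (hat r h (k - i)))

theorem word_mem {R : Set (Word S)} {f : ℤ → S × Bool} {n : ℤ} (hr : RRel R f n) :
    word f n.toNat ∈ symmClosure R := by
  obtain ⟨r, hR, h, rfl, k, hf | hf⟩ := hr
  · refine ⟨r, hR, (k % (r.length : ℤ)).toNat, Or.inl ?_⟩
    obtain rfl : f = fun i => hat r h (i + k) := funext hf
    exact word_hat r h k
  · have h' : 0 < (wordInv r).length := by rw [wordInv_length]; exact h
    refine ⟨r, hR, ((-1 - k) % ((wordInv r).length : ℤ)).toNat, Or.inr ?_⟩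
    rw [← word_hat (wordInv r) h']
    rw [wordInv_length, Int.toNat_natCast]
    congr 1
    funext i
    rw [hf, hat_wordInv r h h']
    congr 2; ring

theorem rrel_per {R : Set (Word S)} {f : ℤ → S × Bool} {n : ℤ} (hr : RRel R f n) (c i : ℤ) :
    f (i + n * c) = f i := by
  obtain ⟨r, hR, h, rfl, k, hf | hf⟩ := hr
  · rw [hf, hf]; exact hat_per r h ⟨c, by ring⟩
  · rw [hf, hf]; congr 1; exact hat_per r h ⟨-c, by ring⟩

theorem rrel_pos {R : Set (Word S)} {f : ℤ → S × Bool} {n : ℤ} (hr : RRel R f n) : 0 < n := by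
  obtain ⟨r, hR, h, rfl, -⟩ := hr
  exact_mod_cast h

theorem word_take (f : ℤ → S × Bool) {l n : ℕ} (h : l ≤ n) : word f l <+: word f n := by
  obtain ⟨k, rfl⟩ := Nat.exists_eq_add_of_le h
  rw [word, word, List.range_add, List.map_append]
  exact List.prefix_append _ _

theorem word_congr {f g : ℤ → S × Bool} {l : ℕ} (h : ∀ i : ℤ, 0 ≤ i → i < l → f i = g i) :
    word f l = word g l := by
  apply List.map_congr_left
  intro j hj
  rw [List.mem_range] at hj
  exact h j (by omega) (by omega)

theorem rsmall {R : Set (Word S)} (hsc : SmallCancellation R (1 / 6)) {f g : ℤ → S × Bool}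
    {n m : ℤ} (hf : RRel R f n) (hg : RRel R g m) (l : ℤ)
    (hl : ∀ i, 0 ≤ i → i < l → f i = g i) : (f = g ∧ n = m) ∨ (6 * l < n ∧ 6 * l < m) := by
  have hn := rrel_pos hf
  have hm := rrel_pos hg
  rcases le_or_gt l 0 with h0 | h0
  · right; omega
  by_cases he : word f n.toNat = word g m.toNat
  · left
    have h1 : n = m := by
      have := congrArg List.length he
      rw [word_length, word_length] at this; omega
    subst h1
    refine ⟨funext fun i => ?_, rfl⟩
    have h1 := Int.emod_nonneg i hn.ne'
    have h2 := Int.emod_lt_of_pos i hn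
    have h3 := Int.emod_add_mul_ediv i n
    rw [← h3, rrel_per hf, rrel_per hg]
    have := List.getElem_of_eq he (i := (i % n).toNat) (by rw [word_length]; omega)
    simp only [word, List.getElem_map, List.getElem_range] at this
    rwa [Int.toNat_of_nonneg h1] at this
  · right
    set t : ℕ := min l.toNat (min n.toNat m.toNat) with ht
    have hp : word f t = word g t := word_congr fun i hi hi' => hl i hi (by omega)
    have p1 : word f t <+: word f n.toNat := word_take f (by omega)
    have p2 : word f t <+: word g m.toNat := by rw [hp]; exact word_take g (by omega)
    have hpc : IsPiece R (word f t) := by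
      refine ⟨?_, _, word_mem hf, _, word_mem hg, he, p1, p2⟩
      intro h
      have := congrArg List.length h
      rw [word_length, List.length_nil] at this
      omega
    have c1 := hsc.2 _ (word_mem hf) _ hpc p1.isInfix
    have c2 := hsc.2 _ (word_mem hg) _ hpc p2.isInfix
    rw [word_length, word_length] at c1 c2
    have c1' : 6 * t < n.toNat := by
      have : (6 : ℝ) * t < n.toNat := by linarith
      exact_mod_cast this
    have c2' : 6 * t < m.toNat := by
      have : (6 : ℝ) * t < m.toNat := by linarith
      exact_mod_cast this
    omega

def relSys (R : Set (Word S)) (hsc : SmallCancellation R (1 / 6)) : RelSys (S × Bool) where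
  inv := linv
  inv_inv := linv_linv
  Rel := RRel R
  pos := rrel_pos
  per := by
    intro f n hr i
    have := rrel_per hr 1 i
    rwa [mul_one] at this
  shift := by
    rintro f n ⟨r, hR, h, rfl, k, hf | hf⟩ j
    · exact ⟨r, hR, h, rfl, j + k, Or.inl fun i => by simp only [hf]; congr 1; ring⟩
    · exact ⟨r, hR, h, rfl, k - j, Or.inr fun i => by simp only [hf]; congr 2; ring⟩
  rev := by
    rintro f n ⟨r, hR, h, rfl, k, hf | hf⟩ j
    · exact ⟨r, hR, h, rfl, j + k, Or.inr fun i => by simp only [hf]; congr 2; ring⟩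
    · exact ⟨r, hR, h, rfl, k - j, Or.inl fun i => by simp only [hf, linv_linv]; congr 1; ring⟩
  red := by
    rintro f n ⟨r, hR, h, rfl, k, hf | hf⟩ i
    · rw [hf, hf]
      have := hat_red r h (hsc.1 r hR) (i + k)
      rwa [add_right_comm] at this
    · rw [hf, hf, linv_linv]
      have := hat_red r h (hsc.1 r hR) (k - (i + 1))
      intro h2
      apply this
      rw [h2]; congr 1; ring
  small := fun hf hg l hl => rsmall hsc hf hg l hl

theorem rrel_hat {R : Set (Word S)} {r : Word S} (hR : r ∈ R) (h : 0 < r.length) :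
    RRel R (hat r h) r.length := ⟨r, hR, h, rfl, 0, Or.inl fun i => by rw [add_zero]⟩

end Words
end SCG

namespace SCG
open MorseLTG

section Eval
variable {S : Type*} {G : Type*} [Group G] (σ : S → G)

theorem ev_append (u v : Word S) : evalWord σ (u ++ v) = evalWord σ u * evalWord σ v := by
  simp [evalWord]

theorem ev_inv (u : Word S) : evalWord σ (wordInv u) = (evalWord σ u)⁻¹ := by
  induction u with
  | nil => simp [evalWord, wordInv]
  | cons a u ih =>
    have h1 : wordInv (a :: u) = wordInv u ++ [(a.1, !a.2)] := by simp [wordInv]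
    have h2 : evalWord σ (a :: u) = evalWord σ [a] * evalWord σ u := ev_append σ [a] u
    rw [h1, ev_append, ih, h2, mul_inv_rev]
    congr 1
    rcases a with ⟨s, b⟩
    cases b <;> simp [evalWord]

theorem wordDist_le {g h : G} (w : Word S) (hw : g * evalWord σ w = h) :
    wordDist σ g h ≤ w.length := Nat.sInf_le ⟨w, rfl, hw⟩

theorem wordDist_comm (g h : G) : wordDist σ g h = wordDist σ h g := by
  unfold wordDist
  congr 1
  ext n
  constructor
  · rintro ⟨w, rfl, rfl⟩
    exact ⟨wordInv w, wordInv_length w, by rw [ev_inv]; group⟩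
  · rintro ⟨w, rfl, rfl⟩
    exact ⟨wordInv w, wordInv_length w, by rw [ev_inv]; group⟩

theorem wordDist_eq {g h : G} {n : ℕ} (hw : ∃ w : Word S, w.length ≤ n ∧ g * evalWord σ w = h)
    (hl : ∀ w : Word S, g * evalWord σ w = h → n ≤ w.length) : wordDist σ g h = n := by
  obtain ⟨w, h1, h2⟩ := hw
  apply le_antisymm ((wordDist_le σ w h2).trans h1)
  exact le_csInf ⟨_, w, rfl, h2⟩ (by rintro _ ⟨w, rfl, hw⟩; exact hl w hw)

def cyc (g : G) (r : Word S) (i : ℤ) : G := g * evalWord σ (r.take (i % (r.length : ℤ)).toNat)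

variable {σ}

theorem cyc_step {g : G} {r : Word S} (h : 0 < r.length) (hr : evalWord σ r = 1) (i : ℤ) :
    cyc σ g r (i + 1) = cyc σ g r i * evalWord σ [hat r h i] := by
  have h1 := Int.emod_nonneg i (b := (r.length : ℤ)) (by omega)
  have h2 := Int.emod_lt_of_pos i (b := (r.length : ℤ)) (by omega)
  have h3 := hat_idx r h i
  unfold cyc
  rw [mul_assoc, ← ev_append]
  unfold hat
  rw [← List.take_succ_eq_append_getElem h3]
  congr 1
  rcases eq_or_lt_of_le (Int.add_one_le_iff.2 h2) with h4 | h4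
  · have h5 : (i + 1) % (r.length : ℤ) = 0 := by
      rw [Int.add_emod_eq_add_emod_right 1 (Int.emod_emod i _).symm, h4, Int.emod_self]
    rw [h5]
    have : (i % (r.length : ℤ)).toNat + 1 = r.length := by omega
    rw [this, List.take_length, hr]
    simp [evalWord]
  · have h5 : (i + 1) % (r.length : ℤ) = i % r.length + 1 := by
      rw [Int.add_emod_eq_add_emod_right 1 (Int.emod_emod i _).symm, Int.emod_eq_of_lt (by omega) h4]
    rw [h5]
    congr 2
    omega

theorem cyc_per {g : G} {r : Word S} (i : ℤ) : cyc σ g r (i + r.length) = cyc σ g r i := by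
  unfold cyc; rw [Int.add_emod_right]

theorem cyc_nat {g : G} {r : Word S} (hr : evalWord σ r = 1) (t : ℕ) (ht : t ≤ r.length) :
    cyc σ g r t = g * evalWord σ (r.take t) := by
  rcases eq_or_lt_of_le ht with rfl | ht
  · unfold cyc
    rw [Int.emod_self, List.take_length, hr]; simp [evalWord]
  · unfold cyc
    rw [Int.emod_eq_of_lt (by omega) (by omega)]
    simp

theorem cyc_run {g : G} {r : Word S} (h : 0 < r.length) (hr : evalWord σ r = 1) (i : ℤ) (k : ℕ) :
    cyc σ g r i * evalWord σ (word (fun t => hat r h (i + t)) k) = cyc σ g r (i + k) := by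
  induction k with
  | zero => simp [word, evalWord]
  | succ k ih =>
    have : word (fun t => hat r h (i + t)) (k + 1) =
      word (fun t => hat r h (i + t)) k ++ [hat r h (i + k)] := by
      simp [word, List.range_succ]
    rw [this, ev_append, ← mul_assoc, ih, ← cyc_step h hr]
    congr 1; push_cast; ring

end Eval

section Iso
variable {S : Type*} {R : Set (Word S)}

theorem ev_rel {r : Word S} (hR : r ∈ R) : evalWord (presGen R) r = 1 := by
  have h1 : evalWord (presGen R) r = PresentedGroup.mk (FreeGroup.mk '' R) (FreeGroup.mk r) := by
    have h2 : FreeGroup.lift (presGen R) = PresentedGroup.mk (FreeGroup.mk '' R) := by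
      apply FreeGroup.ext_hom
      intro a
      rw [FreeGroup.lift_apply_of]
      rfl
    rw [← h2, FreeGroup.lift_mk, evalWord]
    congr 1
    apply List.map_congr_left
    rintro ⟨s, b⟩ -
    cases b <;> rfl
  rw [h1]
  exact PresentedGroup.one_of_mem ⟨r, hR, rfl⟩

theorem lower (hsc : SmallCancellation R (1 / 6)) {r : Word S} (hR : r ∈ R) (h : 0 < r.length)
    (g : PresentedGroup (FreeGroup.mk '' R)) (i j : ℤ) (w : Word S)
    (hw : cyc (presGen R) g r i * evalWord (presGen R) w = cyc (presGen R) g r j) :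
    cdist r.length (j - i) ≤ w.length := by
  obtain ⟨Z, act, ζ, hinv, hrel, hstep, hdist⟩ :=
    main (Q := relSys R hsc) (f := hat r h) (n := r.length) (rrel_hat hR h)
  have hinv1 : ∀ a x, act (linv a) (act a x) = x := hinv
  have hinv2 : ∀ a x, act a (act (linv a) x) = x := fun a x => by
    have := hinv1 (linv a) x
    rwa [linv_linv] at this
  let P : S → Equiv.Perm Z := fun s =>
    ⟨act (s, false), act (s, true), fun x => hinv1 (s, false) x, fun x => hinv1 (s, true) x⟩
  have hP : ∀ (u : Word S) (x : Z),
      (FreeGroup.lift P (FreeGroup.mk u))⁻¹ x = u.foldl (fun x a => act a x) x := by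
    intro u
    induction u with
    | nil => intro x; rw [FreeGroup.lift_mk]; simp
    | cons a u ih =>
      intro x
      rw [FreeGroup.lift_mk, List.map_cons, List.prod_cons, ← FreeGroup.lift_mk, mul_inv_rev,
        Equiv.Perm.mul_apply, ih, List.foldl_cons]
      congr 1
      rcases a with ⟨s, b⟩
      cases b <;> rfl
  have hone : ∀ u ∈ FreeGroup.mk '' R, FreeGroup.lift P u = 1 := by
    rintro _ ⟨u, hu, rfl⟩
    rw [← inv_eq_one]
    ext x
    rw [hP]
    rcases Nat.eq_zero_or_pos u.length with h0 | h0
    · rw [List.length_eq_zero_iff] at h0; subst h0; rfl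
    · have := hrel (hat u h0) u.length (rrel_hat hu h0) x
      have e := word_hat0 u h0
      unfold word at e
      rwa [e] at this
  let Φ := PresentedGroup.toGroup hone
  have hev : ∀ (u : Word S) (x : Z), (Φ (evalWord (presGen R) u))⁻¹ x =
      u.foldl (fun x a => act a x) x := by
    intro u x
    rw [← hP]
    congr 2
    rw [FreeGroup.lift_mk, evalWord, map_list_prod, List.map_map]
    congr 1
    apply List.map_congr_left
    rintro ⟨s, b⟩ -
    cases b <;> simp [presGen, Φ]
  have hcr := ev_rel hR
  obtain ⟨x0, hx0⟩ : ∃ x0, (Φ (cyc (presGen R) g r 0))⁻¹ x0 = ζ 0 :=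
    ⟨Φ (cyc (presGen R) g r 0) (ζ 0), by simp⟩
  have hs : ∀ i, (Φ (cyc (presGen R) g r (i + 1)))⁻¹ x0 =
      act (hat r h i) ((Φ (cyc (presGen R) g r i))⁻¹ x0) := by
    intro i
    rw [cyc_step h hcr, map_mul, mul_inv_rev, Equiv.Perm.mul_apply, hev]
    rfl
  have hz : ∀ i, (Φ (cyc (presGen R) g r i))⁻¹ x0 = ζ i := by
    intro i
    induction i using Int.induction_on with
    | zero => exact hx0
    | succ i ih => rw [hs, ih, hstep]
    | pred i ih =>
      have h1 := hs (-(i : ℤ) - 1)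
      have h2 := hstep (-(i : ℤ) - 1)
      rw [sub_add_cancel] at h1 h2
      rw [ih, ← h2] at h1
      have := congrArg (act (linv (hat r h (-(i : ℤ) - 1)))) h1
      rw [hinv1, hinv1] at this
      exact this.symm
  apply hdist
  rw [← hev, ← hz, ← hz, ← hw, map_mul, mul_inv_rev, Equiv.Perm.mul_apply]

theorem dist_cyc_nat (hsc : SmallCancellation R (1 / 6)) {r : Word S} (hR : r ∈ R)
    (h : 0 < r.length) (g : PresentedGroup (FreeGroup.mk '' R)) (i : ℤ) (d : ℕ)
    (hd : d ≤ r.length) :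
    wordDist (presGen R) (cyc (presGen R) g r i) (cyc (presGen R) g r (i + d)) =
      min d (r.length - d) := by
  have hcr := ev_rel hR
  apply wordDist_eq
  · rcases le_total d (r.length - d) with h1 | h1
    · exact ⟨_, by rw [word_length, min_eq_left h1], cyc_run h hcr i d⟩
    · have h2 := cyc_run (g := g) h hcr (i + d) (r.length - d)
      rw [show i + d + ((r.length - d : ℕ) : ℤ) = i + r.length by omega, cyc_per] at h2
      refine ⟨wordInv (word (fun t => hat r h (i + d + t)) (r.length - d)), ?_, ?_⟩
      · rw [wordInv_length, word_length, min_eq_right h1]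
      · rw [ev_inv, ← h2]; group
  · intro w hw
    have h1 := lower hsc hR h g i (i + d) w hw
    rcases eq_or_lt_of_le hd with rfl | hd
    · simp
    · have : NeZero r.length := ⟨h.ne'⟩
      rw [cdist, add_sub_cancel_left, ZMod.valMinAbs_natAbs_eq_min, Int.cast_natCast,
        ZMod.val_natCast_of_lt hd] at h1
      exact h1

theorem dist_cyc (hsc : SmallCancellation R (1 / 6)) {r : Word S} (hR : r ∈ R)
    (h : 0 < r.length) (g : PresentedGroup (FreeGroup.mk '' R)) (i j : ℤ)
    (hd : |j - i| ≤ r.length) :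
    (wordDist (presGen R) (cyc (presGen R) g r i) (cyc (presGen R) g r j) : ℤ) =
      min |j - i| (r.length - |j - i|) := by
  rcases le_total i j with hij | hij
  · have h1 := dist_cyc_nat hsc hR h g i (j - i).toNat (by rw [abs_of_nonneg (by omega)] at hd; omega)
    rw [show i + ((j - i).toNat : ℤ) = j by omega] at h1
    rw [h1, abs_of_nonneg (by omega)]
    rw [abs_of_nonneg (by omega)] at hd
    omega
  · have h1 := dist_cyc_nat hsc hR h g j (i - j).toNat (by rw [abs_of_nonpos (by omega)] at hd; omega)
    rw [show j + ((i - j).toNat : ℤ) = i by omega] at h1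
    rw [wordDist_comm, h1, abs_of_nonpos (by omega)]
    rw [abs_of_nonpos (by omega)] at hd
    omega

theorem final (hsc : SmallCancellation R (1 / 6))
    (hgmltg : CayGeodesicMLTG (presGen R))
    (M : ℝ → ℝ) (hM : IsMorseGauge M) :
    ∃ L : ℝ, 0 < L ∧ ∀ N : ℕ, 2 ≤ N → ∃ D : ℝ,
      ∀ r ∈ R, ∀ w : Word S, w <:+: r → (r.length : ℝ) / N ≤ (w.length : ℝ) →
        (∃ g : PresentedGroup (FreeGroup.mk '' R),
            DLocMorseOn (presGen R) M L (Set.Icc 0 (w.length : ℤ))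
              (pathOfWord (presGen R) g w)) →
        (r.length : ℝ) ≤ D := by
  obtain ⟨L, M', hL, hM', hltg⟩ := hgmltg M hM
  refine ⟨L, hL, fun N hN => ⟨4 * M' N + 2, ?_⟩⟩
  rintro r hR w ⟨s, t, hst⟩ hlen ⟨g, hloc⟩
  have hN1 : (1 : ℝ) ≤ N := by exact_mod_cast (by omega : 1 ≤ N)
  have hN2 : (2 : ℝ) ≤ N := by exact_mod_cast hN
  have hM0 := hM'.2.2 N hN1
  rcases Nat.eq_zero_or_pos r.length with h0 | h0
  · rw [h0]; push_cast; linarith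
  have hcr := ev_rel hR
  have hrl : s.length + w.length + t.length = r.length := by
    rw [← hst]; simp; omega
  set g' := g * (evalWord (presGen R) s)⁻¹ with hg'
  set n := r.length with hn
  set c := cyc (presGen R) g' r with hc
  have hp : ∀ i : ℤ, 0 ≤ i → i ≤ w.length → pathOfWord (presGen R) g w i = c (s.length + i) := by
    intro i hi hi'
    obtain ⟨k, rfl⟩ := Int.eq_ofNat_of_zero_le hi
    rw [show (s.length : ℤ) + (k : ℤ) = ((s.length + k : ℕ) : ℤ) by push_cast; rfl]
    rw [hc, cyc_nat hcr _ (by omega), ← hst, List.append_assoc, List.take_length_add_append,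
      List.take_append_of_le_length (by omega), ev_append, pathOfWord, hg']
    simp [mul_assoc]
  have hd := fun i j hd => dist_cyc hsc hR h0 g' i j hd
  set m : ℤ := min w.length ((n : ℤ) / 2) with hm
  have hm0 : 0 ≤ m := by omega
  have hmn : 2 * m ≤ n := by omega
  have hmorse : DMorseOn (presGen R) M' (Set.Icc 0 m) (pathOfWord (presGen R) g w) := by
    apply hltg _ Set.ordConnected_Icc
    · rintro i ⟨hi, hi'⟩ j ⟨hj, hj'⟩
      rw [hp i hi (by omega), hp j hj (by omega), hd]
      · rw [add_sub_add_left_eq_sub]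
        have : |j - i| ≤ m := abs_le.2 ⟨by omega, by omega⟩
        rw [min_eq_left]
        omega
      · rw [add_sub_add_left_eq_sub]
        have : |j - i| ≤ m := abs_le.2 ⟨by omega, by omega⟩
        omega
    · rintro i ⟨hi, hi'⟩ j ⟨hj, hj'⟩ hij hL
      exact hloc i ⟨hi, by omega⟩ j ⟨hj, by omega⟩ hij hL
  have hmr : (n : ℝ) / N - N ≤ m := by
    rcases min_choice (w.length : ℤ) ((n : ℤ) / 2) with h1 | h1
    · rw [← hm] at h1
      rw [h1]; push_cast; linarith
    · rw [← hm] at h1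
      have h2 : (n : ℤ) ≤ 2 * m + 1 := by omega
      have h3 : (n : ℝ) ≤ 2 * m + 1 := by exact_mod_cast h2
      have h4 : (n : ℝ) / N ≤ n / 2 := by gcongr
      linarith
  have hq : DQGeoOn (presGen R) N (Set.Icc 0 (n - m)) (fun k => c (s.length - k)) := by
    have hdq : ∀ i j : ℤ, |j - i| ≤ n → (wordDist (presGen R) (c (s.length - i)) (c (s.length - j)) : ℤ)
        = min |j - i| (n - |j - i|) := by
      intro i j hij
      have : |(s.length - j : ℤ) - (s.length - i)| = |j - i| := by
        rw [sub_sub_sub_cancel_left, abs_sub_comm]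
      rw [hd _ _ (by rw [this]; exact hij), this]
    refine ⟨?_, ?_⟩
    · intro i hi hi'
      have := hdq i (i + 1) (by simp; omega)
      simp only [add_sub_cancel_left, abs_one] at this
      change wordDist (presGen R) (c (s.length - i)) (c (s.length - (i + 1))) ≤ 1
      omega
    · rintro i ⟨hi, hi'⟩ j ⟨hj, hj'⟩
      have hij : |j - i| ≤ n - m := abs_le.2 ⟨by omega, by omega⟩
      have h1 := hdq i j (by omega)
      have hab : |(j : ℝ) - i| = ((|j - i| : ℤ) : ℝ) := by push_cast; rfl
      have hpos : 0 ≤ |j - i| := abs_nonneg _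
      rw [hab]
      generalize |j - i| = d at *
      change (d : ℝ) / N - N ≤ (wordDist (presGen R) (c (s.length - i)) (c (s.length - j)) : ℝ) ∧
        (wordDist (presGen R) (c (s.length - i)) (c (s.length - j)) : ℝ) ≤ N * d + N
      generalize wordDist (presGen R) (c (s.length - i)) (c (s.length - j)) = e at *
      have hd0 : (0 : ℝ) ≤ d := by exact_mod_cast hpos
      have hdn : (d : ℝ) ≤ n := by exact_mod_cast (by omega : d ≤ n)
      have hdN : (d : ℝ) / N ≤ d := div_le_self hd0 hN1
      constructor
      · rcases min_choice d ((n : ℤ) - d) with h2 | h2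
        · have h3 : (e : ℤ) = d := by omega
          have h3 : (e : ℝ) = d := by exact_mod_cast h3
          linarith
        · have h3 : m ≤ (e : ℤ) := by omega
          have h3 : (m : ℝ) ≤ e := by exact_mod_cast h3
          have h4 : (d : ℝ) / N ≤ n / N := by gcongr
          linarith
      · have h3 : (e : ℤ) ≤ d := by omega
        have h3 : (e : ℝ) ≤ d := by exact_mod_cast h3
        nlinarith
  set k : ℤ := (n - m) / 2 with hk
  obtain ⟨v, ⟨hv, hv'⟩, hfin⟩ := hmorse N hN1 0 ⟨le_rfl, hm0⟩ m ⟨hm0, le_rfl⟩ hm0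
    (fun k => c (s.length - k)) 0 (n - m) (by omega) hq
    (by rw [hp 0 le_rfl (by omega)]; simp)
    (by
      rw [hp m hm0 (by omega)]
      change c (s.length - (n - m)) = _
      rw [hc, ← cyc_per]; congr 1; omega)
    k ⟨by omega, by omega⟩
  rw [hp v hv (by omega)] at hfin
  have hab : |(s.length + v : ℤ) - (s.length - k)| = v + k := by
    rw [abs_of_nonneg (by omega)]; ring
  have h1 := hd (s.length - k) (s.length + v) (by rw [hab]; omega)
  rw [hab] at h1
  change (wordDist (presGen R) (c (s.length - k)) (c (s.length + v)) : ℤ) =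
    min (v + k) (n - (v + k)) at h1
  change (wordDist (presGen R) (c (s.length - k)) (c (s.length + v)) : ℝ) ≤ M' N at hfin
  have h2 : (n : ℤ) ≤ 4 * (wordDist (presGen R) (c (s.length - k)) (c (s.length + v)) : ℤ) + 2 := by
    omega
  have h3 : (n : ℝ) ≤ 4 * (wordDist (presGen R) (c (s.length - k)) (c (s.length + v)) : ℝ) + 2 := by
    exact_mod_cast h2
  linarith

end Iso
end SCG

open MorseLTG in
/-- in a `C'(1/6)` group satisfying the geodesic MLTG property,
there is a scale `L` such that relators containing an `L`-locally `M`-Morse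
subword making up at least a `1/N` fraction of the relator have bounded length. -/
theorem stmt7 {S : Type*} [Fintype S] (R : Set (Word S))
    (hsc : SmallCancellation R (1 / 6))
    (hgmltg : CayGeodesicMLTG (presGen R))
    (M : ℝ → ℝ) (hM : IsMorseGauge M) :
    ∃ L : ℝ, 0 < L ∧ ∀ N : ℕ, 2 ≤ N → ∃ D : ℝ,
      ∀ r ∈ R, ∀ w : Word S, w <:+: r → (r.length : ℝ) / N ≤ (w.length : ℝ) →
        (∃ g : PresentedGroup (FreeGroup.mk '' R),
            DLocMorseOn (presGen R) M L (Set.Icc 0 (w.length : ℤ))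
              (pathOfWord (presGen R) g w)) →
        (r.length : ℝ) ≤ D := by
  exact SCG.final hsc hgmltg M hM
end

section
/- Let C ≥ 0 be a constant. For each constant l ≥ 0 there exists a constant C_l, depending only on C and l, such that the following holds in any proper geodesic metric space X. Let γ : [0,T] → X be a geodesic and let S ∈ [0,T] be such that γ[0,S] is C-contracting. Let λ : [0,T'] → X be a geodesic with S ≤ T', d(λ(0),γ(0)) ≤ l and d(λ(T'),γ(T)) ≤ l. Then (1) λ[0,S] is C_l-contracting, and (2) the Hausdorff distance between λ[0,S] and γ[0,S] is at most C_l. -/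
open Metric Set Filter

namespace Stmt10Aux
open MorseLTG

variable {X : Type*} [MetricSpace X]

/-- Pairwise form of contraction. -/
def PC (C : ℝ) (A : Set X) : Prop :=
  ∀ x y p q : X, p ∈ projSet A x → q ∈ projSet A y →
    (dist x y < Metric.infDist x A ∨ x = y) → dist p q ≤ C

lemma proj_dist {A : Set X} {x p : X} (hp : p ∈ projSet A x) :
    dist x p = Metric.infDist x A := by
  apply le_antisymm
  · rw [Metric.le_infDist ⟨p, hp.1⟩]
    intro y hy
    exact hp.2 y hy
  · exact Metric.infDist_le_dist_of_mem hp.1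

lemma exists_proj {A : Set X} (hA : IsCompact A) (hne : A.Nonempty) (x : X) :
    ∃ p, p ∈ projSet A x := by
  obtain ⟨p, hp, h⟩ := hA.exists_infDist_eq_dist hne x
  refine ⟨p, hp, fun z hz => ?_⟩
  rw [← h]
  exact Metric.infDist_le_dist_of_mem hz

lemma self_proj {A : Set X} {x : X} (hx : x ∈ A) : x ∈ projSet A x :=
  ⟨hx, fun z _ => by simp⟩

lemma pc_of_contracting {C C' : ℝ} (hC : 0 ≤ C) (hCC : C ≤ C') {A : Set X} (hA : IsCompact A)
    (h : ContractingSet C A) : PC C' A := by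
  intro x y p q hp hq hxy
  refine le_trans ?_ hCC
  have key : dist x y < Metric.infDist x A → dist p q ≤ C := by
    intro hlt
    refine le_trans (Metric.dist_le_diam_of_mem ?_ ?_ ?_) (h x)
    · refine hA.isBounded.subset ?_
      intro z hz
      simp only [Set.mem_iUnion] at hz
      obtain ⟨_, _, hz⟩ := hz
      exact hz.1
    · simp only [Set.mem_iUnion]
      exact ⟨x, Metric.mem_ball_self (lt_of_le_of_lt dist_nonneg hlt), hp⟩
    · simp only [Set.mem_iUnion]
      exact ⟨y, by rwa [Metric.mem_ball, dist_comm], hq⟩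
  rcases hxy with hlt | rfl
  · exact key hlt
  · rcases (Metric.infDist_nonneg (x := x) (s := A)).eq_or_lt with h0 | h0
    · have h1 := proj_dist hp
      have h2 := proj_dist hq
      rw [← h0] at h1 h2
      have := dist_triangle_left p q x
      linarith
    · exact key (by simpa using h0)

lemma geo_mono {I J : Set ℝ} {α : ℝ → X} (h : GeodesicOn I α) (hJ : J ⊆ I) : GeodesicOn J α :=
  fun s hs t ht => h s (hJ hs) t (hJ ht)

lemma geo_le {I : Set ℝ} {α : ℝ → X} (h : GeodesicOn I α) {s t : ℝ} (hs : s ∈ I) (ht : t ∈ I)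
    (hst : s ≤ t) : dist (α s) (α t) = t - s := by
  rw [h s hs t ht, abs_of_nonneg (by linarith)]

lemma geo_cont {I : Set ℝ} {α : ℝ → X} (h : GeodesicOn I α) : ContinuousOn α I := by
  have : LipschitzOnWith 1 α I := by
    apply LipschitzOnWith.of_dist_le_mul
    intro x hx y hy
    rw [h x hx y hy, Real.dist_eq, abs_sub_comm]
    simp
  exact this.continuousOn

lemma lip (A : Set X) (x y : X) : Metric.infDist x A ≤ Metric.infDist y A + dist x y :=
  Metric.infDist_le_infDist_add_dist

lemma last_time {a b : ℝ} (hab : a ≤ b) {α : ℝ → X} (h : GeodesicOn (Set.Icc a b) α)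
    (A : Set X) (D : ℝ) (h0 : Metric.infDist (α a) A ≤ D) :
    ∃ v ∈ Set.Icc a b, Metric.infDist (α v) A ≤ D ∧
      ∀ u ∈ Set.Icc a b, v < u → D < Metric.infDist (α u) A := by
  have hf : ContinuousOn (fun t => Metric.infDist (α t) A) (Set.Icc a b) :=
    (Metric.continuous_infDist_pt A).comp_continuousOn (geo_cont h)
  have hcl : IsClosed (Set.Icc a b ∩ (fun t => Metric.infDist (α t) A) ⁻¹' Set.Iic D) :=
    hf.preimage_isClosed_of_isClosed isClosed_Icc isClosed_Iic
  have hc := isCompact_Icc.of_isClosed_subset hcl Set.inter_subset_left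
  obtain ⟨v, hv, hmax⟩ := hc.exists_isGreatest ⟨a, ⟨le_rfl, hab⟩, h0⟩
  refine ⟨v, hv.1, hv.2, fun u hu hvu => ?_⟩
  by_contra hcon
  have := hmax ⟨hu, not_lt.mp hcon⟩
  linarith

lemma first_time {a b : ℝ} (hab : a ≤ b) {α : ℝ → X} (h : GeodesicOn (Set.Icc a b) α)
    (A : Set X) (D : ℝ) (h0 : Metric.infDist (α b) A ≤ D) :
    ∃ v ∈ Set.Icc a b, Metric.infDist (α v) A ≤ D ∧
      ∀ u ∈ Set.Icc a b, u < v → D < Metric.infDist (α u) A := by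
  have hf : ContinuousOn (fun t => Metric.infDist (α t) A) (Set.Icc a b) :=
    (Metric.continuous_infDist_pt A).comp_continuousOn (geo_cont h)
  have hcl : IsClosed (Set.Icc a b ∩ (fun t => Metric.infDist (α t) A) ⁻¹' Set.Iic D) :=
    hf.preimage_isClosed_of_isClosed isClosed_Icc isClosed_Iic
  have hc := isCompact_Icc.of_isClosed_subset hcl Set.inter_subset_left
  obtain ⟨v, hv, hmin⟩ := hc.exists_isLeast ⟨b, ⟨hab, le_rfl⟩, h0⟩
  refine ⟨v, hv.1, hv.2, fun u hu hvu => ?_⟩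
  by_contra hcon
  have := hmin ⟨hu, not_lt.mp hcon⟩
  linarith

lemma jump {C : ℝ} (hC : 0 < C) {A : Set X} (hA : IsCompact A) (hne : A.Nonempty) (hP : PC C A)
    {s t : ℝ} {α : ℝ → X} (h : GeodesicOn (Set.Icc s t) α)
    (hfar : ∀ u ∈ Set.Icc s t, 4 * C ≤ Metric.infDist (α u) A) (n : ℕ) :
    ∀ u v : ℝ, s ≤ u → u ≤ v → v ≤ t → v - u ≤ n * (2 * C) → ∀ p q, p ∈ projSet A (α u) →
      q ∈ projSet A (α v) → dist p q ≤ (n + 1) * C := by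
  induction n with
  | zero =>
    intro u v hsu huv hvt hn p q hp hq
    have : u = v := by
      push_cast at hn
      linarith
    subst this
    have := hP _ _ _ _ hp hq (Or.inr rfl)
    push_cast
    linarith
  | succ n ih =>
    intro u v hsu huv hvt hn p q hp hq
    push_cast at hn ⊢
    by_cases hle : v - u ≤ 2 * C
    · have h1 := geo_le h (s := u) (t := v) ⟨hsu, by linarith⟩ ⟨by linarith, hvt⟩ huv
      have h2 := hfar u ⟨hsu, by linarith⟩
      have h3 := hP _ _ _ _ hp hq (Or.inl (by linarith))
      have : 0 ≤ (n : ℝ) * C := by positivity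
      nlinarith
    · push Not at hle
      obtain ⟨r, hr⟩ := exists_proj hA hne (α (u + 2 * C))
      have h1 := geo_le h (s := u) (t := u + 2 * C) ⟨hsu, by linarith⟩
        ⟨by linarith, by linarith⟩ (by linarith)
      have h2 := hfar u ⟨hsu, by linarith⟩
      have h3 := hP _ _ _ _ hp hr (Or.inl (by linarith))
      have h4 := ih (u + 2 * C) v (by linarith) (by linarith) hvt (by linarith) r q hr hq
      have := dist_triangle p r q
      linarith

/-- Geodesics that stay far away have bounded projection. -/
lemma far_proj {C : ℝ} (hC : 0 < C) {A : Set X} (hA : IsCompact A) (hne : A.Nonempty)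
    (hP : PC C A) {s t : ℝ} (hst : s ≤ t) {α : ℝ → X} (h : GeodesicOn (Set.Icc s t) α)
    (hfar : ∀ u ∈ Set.Icc s t, s < u → u < t → 4 * C < Metric.infDist (α u) A)
    {p q : X} (hp : p ∈ projSet A (α s)) (hq : q ∈ projSet A (α t)) : dist p q ≤ 10 * C := by
  rcases hst.eq_or_lt with rfl | hlt
  · have := hP _ _ _ _ hp hq (Or.inr rfl)
    linarith
  have hs : s ∈ Set.Icc s t := ⟨le_rfl, hst⟩
  have ht : t ∈ Set.Icc s t := ⟨hst, le_rfl⟩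
  have hfar' : ∀ u ∈ Set.Icc s t, 4 * C ≤ Metric.infDist (α u) A := by
    intro u hu
    apply le_of_forall_pos_le_add
    intro ε hε
    -- an interior point near `u`
    obtain ⟨w, hw1, hw2, hw3⟩ : ∃ w, s < w ∧ w < t ∧ |w - u| ≤ ε := by
      have hm : 0 < min ε (t - s) := lt_min hε (by linarith)
      have hm1 := min_le_left ε (t - s)
      have hm2 := min_le_right ε (t - s)
      by_cases hc : u ≤ (s + t) / 2
      · refine ⟨u + min ε (t - s) / 4, by linarith [hu.1], by linarith, ?_⟩
        rw [abs_le]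
        constructor <;> linarith
      · refine ⟨u - min ε (t - s) / 4, by linarith [hu.1], by linarith [hu.2], ?_⟩
        rw [abs_le]
        constructor <;> linarith
    have hw : w ∈ Set.Icc s t := ⟨hw1.le, hw2.le⟩
    have h1 := hfar w hw hw1 hw2
    have h2 := lip A (α w) (α u)
    rw [dist_comm, h u hu w hw] at h2
    linarith
  have ha := hfar' s hs
  have hb := hfar' t ht
  have hpa := proj_dist hp
  have hqb := proj_dist hq
  set a := Metric.infDist (α s) A
  set b := Metric.infDist (α t) A
  have hst' := geo_le h hs ht hst
  by_cases h1 : t - s < a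
  · have := hP _ _ _ _ hp hq (Or.inl (by linarith))
    linarith
  push Not at h1
  have hm : s + a - C ∈ Set.Icc s t := ⟨by linarith, by linarith⟩
  obtain ⟨r, hr⟩ := exists_proj hA hne (α (s + a - C))
  have hsm := geo_le h hs hm hm.1
  have hmt := geo_le h hm ht hm.2
  have e1 := hP _ _ _ _ hp hr (Or.inl (by linarith))
  by_cases h2 : t - (s + a - C) < b
  · have := hP _ _ _ _ hq hr (Or.inl (by rw [dist_comm]; linarith))
    have := dist_triangle_right p q r
    linarith
  push Not at h2
  have hm' : t - b + C ∈ Set.Icc s t := ⟨by linarith, by linarith⟩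
  obtain ⟨r', hr'⟩ := exists_proj hA hne (α (t - b + C))
  have hmt' := geo_le h hm' ht hm'.2
  have e2 := hP _ _ _ _ hq hr' (Or.inl (by rw [dist_comm]; linarith))
  set L := (t - b + C) - (s + a - C) with hL
  have hn1 := Nat.le_ceil (L / (2 * C))
  have hn2 := Nat.ceil_lt_add_one (a := L / (2 * C)) (by apply div_nonneg <;> linarith)
  rw [div_le_iff₀ (by linarith)] at hn1
  have e3 := jump hC hA hne hP h hfar' ⌈L / (2 * C)⌉₊ (s + a - C) (t - b + C) hm.1
    (by linarith) hm'.2 hn1 r r' hr hr'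
  have e4 : ((⌈L / (2 * C)⌉₊ : ℝ) + 1) * C ≤ (L / (2 * C) + 2) * C := by
    apply mul_le_mul_of_nonneg_right _ hC.le
    linarith
  have e5 : (L / (2 * C) + 2) * C = L / 2 + 2 * C := by
    field_simp
  have t1 := dist_triangle p r q
  have t2 := dist_triangle r r' q
  rw [dist_comm r' q] at t2
  have t3 := dist_triangle4 (α s) p q (α t)
  rw [dist_comm q (α t)] at t3
  linarith

lemma back_track {C : ℝ} (hC : 0 < C) (hX : GeodesicSpace X) {A : Set X} (hA : IsCompact A)
    (hP : PC C A) {x p a : X} (hp : p ∈ projSet A x) (ha : a ∈ A) :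
    dist x p + dist p a ≤ dist x a + 28 * C := by
  have hne : A.Nonempty := ⟨a, ha⟩
  obtain ⟨α, h0, h1, hg⟩ := hX x a
  have hL : 0 ≤ dist x a := dist_nonneg
  obtain ⟨v, hv, hvD, hfar⟩ := first_time hL hg A (4 * C) (by
    rw [h1, Metric.infDist_zero_of_mem ha]; linarith)
  obtain ⟨r, hr⟩ := exists_proj hA hne (α v)
  have hsub : Set.Icc 0 v ⊆ Set.Icc 0 (dist x a) := Set.Icc_subset_Icc_right hv.2
  have e1 := far_proj hC hA hne hP hv.1 (geo_mono hg hsub)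
    (fun u hu _ hu2 => hfar u (hsub hu) hu2) (p := p) (q := r) (by rwa [h0]) hr
  have e2 := proj_dist hr
  have e3 := geo_le hg ⟨le_rfl, hL⟩ hv hv.1
  have e4 := geo_le hg hv ⟨hL, le_rfl⟩ hv.2
  rw [h0] at e3
  rw [h1] at e4
  have t1 := dist_triangle4 x (α v) r p
  have t2 := dist_triangle4 p r (α v) a
  rw [dist_comm r p] at t1
  rw [dist_comm r (α v)] at t2
  linarith

lemma proj_lip {C : ℝ} (hC : 0 < C) (hX : GeodesicSpace X) {A : Set X} (hA : IsCompact A)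
    (hP : PC C A) {x y p q : X} (hp : p ∈ projSet A x) (hq : q ∈ projSet A y) :
    dist p q ≤ dist x y + 28 * C := by
  have h1 := back_track hC hX hA hP hp hq.1
  have h2 := back_track hC hX hA hP hq hp.1
  have t1 := dist_triangle x y q
  have t2 := dist_triangle y x p
  rw [dist_comm y x] at t2
  rw [dist_comm q p] at h2
  linarith

/-- Contraction passes to sets at bounded distance. -/
lemma transfer {C K : ℝ} (hC : 0 < C) (hK : 0 ≤ K) (hX : GeodesicSpace X) {A B : Set X}
    (hA : IsCompact A) (hneA : A.Nonempty) (hB : IsCompact B) (hneB : B.Nonempty) (hP : PC C A)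
    (hAB : ∀ a ∈ A, ∃ b ∈ B, dist a b ≤ K) (hBA : ∀ b ∈ B, ∃ a ∈ A, dist b a ≤ K) :
    ContractingSet (2 * (85 * C + 7 * K + 1)) B := by
  have near : ∀ x p p', p ∈ projSet A x → p' ∈ projSet B x → dist p p' ≤ 28 * C + 3 * K := by
    intro x p p' hp hp'
    obtain ⟨a, ha, hpa⟩ := hBA p' hp'.1
    obtain ⟨b, hb, hpb⟩ := hAB p hp.1
    have h1 := back_track hC hX hA hP hp ha
    have h2 := hp'.2 b hb
    have t1 := dist_triangle x p b
    have t2 := dist_triangle x p' a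
    have t3 := dist_triangle_right p p' a
    linarith
  have main : ∀ x y p' q', p' ∈ projSet B x → q' ∈ projSet B y → dist x y < Metric.infDist x B →
      dist p' q' ≤ 85 * C + 7 * K + 1 := by
    intro x y p' q' hp' hq' hxy
    obtain ⟨p, hp⟩ := exists_proj hA hneA x
    obtain ⟨q, hq⟩ := exists_proj hA hneA y
    have n1 := near x p p' hp hp'
    have n2 := near y q q' hq hq'
    have hpq : dist p q ≤ 29 * C + K + 1 := by
      have hd : Metric.infDist x B ≤ Metric.infDist x A + K := by
        obtain ⟨b, hb, hpb⟩ := hAB p hp.1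
        have e1 := Metric.infDist_le_dist_of_mem hb (x := x)
        have e2 := dist_triangle x p b
        have e3 := proj_dist hp
        linarith
      by_cases hs : dist x y ≤ K + 1
      · have := proj_lip hC hX hA hP hp hq
        linarith
      · push Not at hs
        obtain ⟨α, h0, h1, hg⟩ := hX x y
        have hm : dist x y - (K + 1) ∈ Set.Icc 0 (dist x y) := ⟨by linarith, by linarith⟩
        have e1 := geo_le hg ⟨le_rfl, dist_nonneg⟩ hm hm.1
        have e2 := geo_le hg hm ⟨dist_nonneg, le_rfl⟩ hm.2
        rw [h0] at e1
        rw [h1] at e2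
        obtain ⟨r, hr⟩ := exists_proj hA hneA (α (dist x y - (K + 1)))
        have e3 := hP _ _ _ _ hp hr (Or.inl (by linarith))
        have e4 := proj_lip hC hX hA hP hr hq
        have := dist_triangle p r q
        linarith
    have t := dist_triangle4 p' p q q'
    rw [dist_comm p' p] at t
    linarith
  intro x
  obtain ⟨p', hp'⟩ := exists_proj hB hneB x
  apply Metric.diam_le_of_forall_dist_le (by positivity)
  intro u hu w hw
  simp only [Set.mem_iUnion] at hu hw
  obtain ⟨y, hy, hu⟩ := hu
  obtain ⟨z, hz, hw⟩ := hw
  rw [Metric.mem_ball, dist_comm] at hy hz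
  have m1 := main x y p' u hp' hu hy
  have m2 := main x z p' w hp' hw hz
  have := dist_triangle_left u w p'
  linarith

lemma fellow {C l : ℝ} (hC : 0 < C) (hl : 0 ≤ l) {γ lam : ℝ → X} {T T' S : ℝ} (hS : 0 ≤ S)
    (hST : S ≤ T) (hST' : S ≤ T') (hγ : GeodesicOn (Set.Icc 0 T) γ)
    (hA : IsCompact (γ '' Set.Icc 0 S)) (hP : PC C (γ '' Set.Icc 0 S))
    (hlam : GeodesicOn (Set.Icc 0 T') lam) (h0 : dist (lam 0) (γ 0) ≤ l)
    (hT : dist (lam T') (γ T) ≤ l) {w : ℝ} (hw : w ∈ Set.Icc 0 S) :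
    dist (lam w) (γ w) ≤ 44 * C + 15 * l := by
  set A := γ '' Set.Icc 0 S with hAdef
  have hγ0 : γ 0 ∈ A := ⟨0, ⟨le_rfl, hS⟩, rfl⟩
  have hγS : γ S ∈ A := ⟨S, ⟨hS, le_rfl⟩, rfl⟩
  have hne : A.Nonempty := ⟨_, hγ0⟩
  have hSm : S ∈ Set.Icc 0 T := ⟨hS, hST⟩
  have hTm : T ∈ Set.Icc 0 T := ⟨by linarith, le_rfl⟩
  have h0m : (0 : ℝ) ∈ Set.Icc 0 T := ⟨le_rfl, by linarith⟩
  have hT'm : T' ∈ Set.Icc 0 T' := ⟨by linarith, le_rfl⟩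
  have h0m' : (0 : ℝ) ∈ Set.Icc 0 T' := ⟨le_rfl, by linarith⟩
  have hprojT : γ S ∈ projSet A (γ T) := by
    refine ⟨hγS, ?_⟩
    rintro _ ⟨s, hs, rfl⟩
    have e1 := geo_le hγ hSm hTm hST
    have e2 := geo_le hγ (s := s) ⟨hs.1, by linarith [hs.2]⟩ hTm (by linarith [hs.2])
    rw [dist_comm, e1, dist_comm, e2]
    linarith [hs.2]
  obtain ⟨q, hq⟩ := exists_proj hA hne (lam T')
  have hqS : dist q (γ S) ≤ 4 * l + C := by
    have e1 := geo_le hγ hSm hTm hST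
    by_cases hc : l < T - S
    · have := hP _ _ _ _ hprojT hq (Or.inl (by
        rw [← proj_dist hprojT, dist_comm, dist_comm (γ T), e1]; linarith))
      rw [dist_comm]
      linarith
    · push Not at hc
      have e2 := hq.2 _ hγS
      have t1 := dist_triangle (lam T') (γ T) (γ S)
      have t2 := dist_triangle_left q (γ S) (lam T')
      rw [dist_comm (γ T)] at t1
      linarith
  have hf0 : Metric.infDist (lam 0) A ≤ 4 * C + l := by
    have := Metric.infDist_le_dist_of_mem hγ0 (x := lam 0)
    linarith
  obtain ⟨v, hv, hvD, hvfar⟩ := last_time (by linarith) hlam A (4 * C + l) hf0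
  obtain ⟨p, hp⟩ := exists_proj hA hne (lam v)
  have hsub : Set.Icc v T' ⊆ Set.Icc 0 T' := Set.Icc_subset_Icc_left hv.1
  have e1 := far_proj hC hA hne hP hv.2 (geo_mono hlam hsub)
    (fun u hu hu1 _ => by linarith [hvfar u (hsub hu) hu1]) hp hq
  have hpv := proj_dist hp
  have hvS : dist (lam v) (γ S) ≤ 15 * C + 5 * l := by
    have := dist_triangle4 (lam v) p q (γ S)
    linarith
  have hSv : S - v ≤ 15 * C + 6 * l := by
    have a1 := geo_le hlam h0m' hv hv.1
    have a2 := geo_le hγ h0m hSm hS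
    have t := dist_triangle4 (γ 0) (lam 0) (lam v) (γ S)
    rw [dist_comm (γ 0) (lam 0)] at t
    linarith
  have hwm : w ∈ Set.Icc 0 T' := ⟨hw.1, by linarith [hw.2]⟩
  have hK : Metric.infDist (lam w) A ≤ 22 * C + 7 * l := by
    by_cases hc : w ≤ v
    · have s1 : Set.Icc 0 w ⊆ Set.Icc 0 T' := Set.Icc_subset_Icc_right hwm.2
      have s2 : Set.Icc w v ⊆ Set.Icc 0 T' := Set.Icc_subset_Icc hw.1 hv.2
      obtain ⟨w1, hw1, hw1D, hf1⟩ := last_time hw.1 (geo_mono hlam s1) A (4 * C + l) hf0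
      obtain ⟨w2, hw2, hw2D, hf2⟩ := first_time hc (geo_mono hlam s2) A (4 * C + l) hvD
      have s3 : Set.Icc w1 w2 ⊆ Set.Icc 0 T' :=
        Set.Icc_subset_Icc hw1.1 (by linarith [hw2.2, hv.2])
      obtain ⟨p1, hp1⟩ := exists_proj hA hne (lam w1)
      obtain ⟨p2, hp2⟩ := exists_proj hA hne (lam w2)
      have e := far_proj hC hA hne hP (by linarith [hw1.2, hw2.1]) (geo_mono hlam s3)
        (fun u hu hu1 hu2 => by
          rcases le_total u w with hh | hh
          · linarith [hf1 u ⟨by linarith [hw1.1], hh⟩ hu1]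
          · linarith [hf2 u ⟨hh, by linarith [hw2.2]⟩ hu2]) hp1 hp2
      have d1 := proj_dist hp1
      have d2 := proj_dist hp2
      have g1 := geo_le hlam (s1 hw1) (s2 hw2) (by linarith [hw1.2, hw2.1])
      have g2 := geo_le hlam (s1 hw1) hwm hw1.2
      have t := dist_triangle4 (lam w1) p1 p2 (lam w2)
      rw [dist_comm p2] at t
      have g3 := geo_le hlam hwm (s2 hw2) hw2.1
      have l1 := lip A (lam w) (lam w1)
      rw [dist_comm] at l1
      linarith [hw2.1]
    · push Not at hc
      have g := geo_le hlam hv hwm hc.le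
      have l1 := lip A (lam w) (lam v)
      rw [dist_comm] at l1
      linarith [hw.2]
  obtain ⟨r, hr⟩ := exists_proj hA hne (lam w)
  have hrd := proj_dist hr
  obtain ⟨s, hs, rfl⟩ := hr.1
  have hsm : s ∈ Set.Icc 0 T := ⟨hs.1, by linarith [hs.2]⟩
  have hwm2 : w ∈ Set.Icc 0 T := ⟨hw.1, by linarith [hw.2]⟩
  have b1 := geo_le hlam h0m' hwm hw.1
  have b2 := geo_le hγ h0m hsm hs.1
  have t1 := dist_triangle4 (γ 0) (lam 0) (lam w) (γ s)
  have t2 := dist_triangle4 (lam 0) (γ 0) (γ s) (lam w)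
  rw [dist_comm (γ 0) (lam 0)] at t1
  rw [dist_comm (γ s) (lam w)] at t2
  have hsw : |w - s| ≤ 22 * C + 8 * l := by
    rw [abs_le]
    constructor <;> linarith
  have t3 := dist_triangle (lam w) (γ s) (γ w)
  rw [hγ s hsm w hwm2] at t3
  linarith

end Stmt10Aux

open MorseLTG in
/-- passing contraction to a nearby geodesic. -/
theorem stmt10 (C : ℝ) (hC : 0 ≤ C) (l : ℝ) (hl : 0 ≤ l) :
    ∃ Cl : ℝ, 0 ≤ Cl ∧
      ∀ (X : Type) [MetricSpace X] [ProperSpace X], GeodesicSpace X →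
        ∀ (γ lam : ℝ → X) (T T' S : ℝ), 0 ≤ S → S ≤ T → S ≤ T' →
          GeodesicOn (Set.Icc 0 T) γ → ContractingOn C (Set.Icc 0 S) γ →
          GeodesicOn (Set.Icc 0 T') lam →
          dist (lam 0) (γ 0) ≤ l → dist (lam T') (γ T) ≤ l →
          ContractingOn Cl (Set.Icc 0 S) lam ∧
            Metric.hausdorffDist (lam '' Set.Icc 0 S) (γ '' Set.Icc 0 S) ≤ Cl := by
  refine ⟨2 * (85 * (C + 1) + 7 * (44 * (C + 1) + 15 * l) + 1), by positivity, ?_⟩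
  intro X _ _ hX γ lam T T' S hS hST hST' hγ hcon hlam h0 hT
  have hlamS := Stmt10Aux.geo_mono hlam (Set.Icc_subset_Icc_right hST')
  have hA : IsCompact (γ '' Set.Icc 0 S) :=
    isCompact_Icc.image_of_continuousOn (Stmt10Aux.geo_cont hcon.1)
  have hB : IsCompact (lam '' Set.Icc 0 S) :=
    isCompact_Icc.image_of_continuousOn (Stmt10Aux.geo_cont hlamS)
  have hne : (Set.Icc 0 S).Nonempty := ⟨0, le_rfl, hS⟩
  have hP := Stmt10Aux.pc_of_contracting hC (by linarith : C ≤ C + 1) hA hcon.2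
  have hf : ∀ w ∈ Set.Icc 0 S, dist (lam w) (γ w) ≤ 44 * (C + 1) + 15 * l := fun w hw =>
    Stmt10Aux.fellow (by linarith) hl hS hST hST' hγ hA hP hlam h0 hT hw
  have hAB : ∀ a ∈ γ '' Set.Icc 0 S, ∃ b ∈ lam '' Set.Icc 0 S,
      dist a b ≤ 44 * (C + 1) + 15 * l := by
    rintro _ ⟨w, hw, rfl⟩
    exact ⟨_, ⟨w, hw, rfl⟩, by rw [dist_comm]; exact hf w hw⟩
  have hBA : ∀ b ∈ lam '' Set.Icc 0 S, ∃ a ∈ γ '' Set.Icc 0 S,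
      dist b a ≤ 44 * (C + 1) + 15 * l := by
    rintro _ ⟨w, hw, rfl⟩
    exact ⟨_, ⟨w, hw, rfl⟩, hf w hw⟩
  refine ⟨⟨hlamS, Stmt10Aux.transfer (by linarith) (by positivity) hX hA (hne.image _) hB
    (hne.image _) hP hAB hBA⟩, ?_⟩
  refine le_trans (Metric.hausdorffDist_le_of_mem_dist (by positivity) hBA hAB) ?_
  linarith
end
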